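/- arXiv:1102.1822 — 7 statements merged into one kernel-verified Lean document; each statement's English description precedes it below -/
import Mathlib

section
/- Let d ∈ ℂ with −1/2 < Re(d) < 0, let t ∈ ℝ and let x ∈ ℝ \ {0}. Then the function u ↦ (t−u)_+^d − (−u)_+^d is Lebesgue integrable on ℝ, and ∫_ℝ e^{iux} ((t−u)_+^d − (−u)_+^d) du = ((e^{itx} − 1)/(ix)) · |x|^{−d} · Γ(d+1) · e^{−sign(x)·iπd/2}. -/
open MeasureTheory

/-- `z₊^d := exp (d * log z)` for `z > 0`, and `0` otherwise. -/
noncomputable def posPow (z : ℝ) (d : ℂ) : ℂ :=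
  if 0 < z then Complex.exp (d * Real.log z) else 0

open Filter Topology Set

lemma posPow_pos {z : ℝ} (hz : 0 < z) (d : ℂ) : posPow z d = (z : ℂ) ^ d := by
  rw [posPow, if_pos hz, Complex.cpow_def_of_ne_zero (by exact_mod_cast hz.ne'),
    Complex.ofReal_log hz.le, mul_comm]

lemma posPow_nonpos {z : ℝ} (hz : z ≤ 0) (d : ℂ) : posPow z d = 0 := by
  rw [posPow, if_neg (not_lt.mpr hz)]

lemma posPow_add_one (z : ℝ) (d : ℂ) : posPow z (d + 1) = z * posPow z d := by
  rcases lt_or_ge 0 z with hz | hz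
  · rw [posPow_pos hz, posPow_pos hz, Complex.cpow_add _ _ (by exact_mod_cast hz.ne'),
      Complex.cpow_one, mul_comm]
  · rw [posPow_nonpos hz, posPow_nonpos hz, mul_zero]

lemma measurable_posPow (d : ℂ) : Measurable (fun z : ℝ => posPow z d) := by
  unfold posPow
  refine Measurable.ite measurableSet_Ioi ?_ measurable_const
  fun_prop

lemma norm_posPow_pos {z : ℝ} (hz : 0 < z) (d : ℂ) : ‖posPow z d‖ = z ^ d.re := by
  rw [posPow_pos hz, Complex.norm_cpow_eq_rpow_re_of_pos hz]

lemma integrable_posPow_exp (d r : ℂ) (hd : -1 < d.re) (hr : 0 < r.re) :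
    Integrable (fun s : ℝ => posPow s d * Complex.exp (-(r * s))) := by
  have h1 := integrableOn_rpow_mul_exp_neg_mul_rpow hd one_pos hr
  rw [← integrable_indicator_iff measurableSet_Ioi] at h1
  refine h1.mono' ?_ ?_
  · exact ((measurable_posPow d).mul (by fun_prop)).aestronglyMeasurable
  · refine Eventually.of_forall fun s => ?_
    rcases lt_or_ge 0 s with hs | hs
    · rw [indicator_of_mem (mem_Ioi.mpr hs), norm_mul, norm_posPow_pos hs, Complex.norm_exp]
      simp
    · rw [posPow_nonpos hs, indicator_of_notMem (by simpa using hs)]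
      simp

lemma hasDerivAt_laplace (d r : ℂ) (hd : -1 < d.re) (hr : 0 < r.re) :
    DifferentiableAt ℂ (fun r : ℂ => ∫ s : ℝ, posPow s d * Complex.exp (-(r * s))) r := by
  have hU : {w : ℂ | r.re / 2 < w.re} ∈ 𝓝 r :=
    (isOpen_lt continuous_const Complex.continuous_re).mem_nhds (by simpa using hr)
  refine (hasDerivAt_integral_of_dominated_loc_of_deriv_le
    (F' := fun w (s : ℝ) => posPow s d * (Complex.exp (-(w * s)) * (-s)))
    (bound := fun s : ℝ => ‖posPow s (d + 1) * Complex.exp (-((r.re / 2 : ℝ) * s))‖) hU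
    ?_ (integrable_posPow_exp d r hd hr) ?_ ?_ ?_ ?_).2.differentiableAt
  · exact Eventually.of_forall fun w =>
      ((measurable_posPow d).mul (by fun_prop)).aestronglyMeasurable
  · exact ((measurable_posPow d).mul (by fun_prop)).aestronglyMeasurable
  · refine Eventually.of_forall fun s w hw => ?_
    rcases lt_or_ge 0 s with hs | hs
    · rw [posPow_add_one]
      simp only [norm_mul, norm_neg, Complex.norm_exp]
      have : Real.exp (-(w * s)).re ≤ Real.exp (-((r.re / 2 : ℝ) * (s : ℂ))).re := by
        apply Real.exp_le_exp.mpr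
        simp only [Complex.neg_re, Complex.mul_re, Complex.ofReal_re, Complex.ofReal_im, mul_zero,
          sub_zero]
        have : r.re / 2 < w.re := hw
        nlinarith
      calc _ = (‖(s : ℂ)‖ * ‖posPow s d‖) * Real.exp (-(w * s)).re := by ring
        _ ≤ _ := by gcongr
    · rw [posPow_nonpos hs, posPow_nonpos hs]; simp
  · exact (integrable_posPow_exp (d + 1) _ (by simp; linarith) (by simpa using hr)).norm
  · refine Eventually.of_forall fun s w hw => ?_
    refine HasDerivAt.const_mul _ (HasDerivAt.cexp ?_)
    have := ((hasDerivAt_id w).mul_const (s : ℂ)).neg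
    rw [one_mul] at this
    exact this

lemma laplace (d r : ℂ) (hd : -1 < d.re) (hr : 0 < r.re) :
    ∫ s : ℝ, posPow s d * Complex.exp (-(r * s)) = r ^ (-(d + 1)) * Complex.Gamma (d + 1) := by
  have hopen : IsOpen {w : ℂ | 0 < w.re} := isOpen_lt continuous_const Complex.continuous_re
  have hA : AnalyticOnNhd ℂ (fun r : ℂ => ∫ s : ℝ, posPow s d * Complex.exp (-(r * s)))
      {w : ℂ | 0 < w.re} :=
    DifferentiableOn.analyticOnNhd
      (fun w hw => (hasDerivAt_laplace d w hd hw).differentiableWithinAt) hopen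
  have hB : AnalyticOnNhd ℂ (fun r : ℂ => r ^ (-(d + 1)) * Complex.Gamma (d + 1))
      {w : ℂ | 0 < w.re} := by
    refine DifferentiableOn.analyticOnNhd (fun w hw => ?_) hopen
    refine (DifferentiableAt.mul_const ?_ _).differentiableWithinAt
    exact differentiableAt_id.cpow_const (Or.inl hw)
  refine hA.eqOn_of_preconnected_of_frequently_eq hB
    (convex_halfSpace_re_gt 0).isPreconnected (z₀ := 1) (by simp) ?_ hr
  have key : ∀ x : ℝ, 0 < x → (∫ s : ℝ, posPow s d * Complex.exp (-((x : ℂ) * s))) =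
      (x : ℂ) ^ (-(d + 1)) * Complex.Gamma (d + 1) := by
    intro x hx
    have := Complex.integral_cpow_mul_exp_neg_mul_Ioi (a := d + 1) (r := x) (by simp; linarith) hx
    rw [one_div, Complex.inv_cpow _ _ (by rw [Complex.arg_ofReal_of_nonneg hx.le]; exact Real.pi_pos.ne),
      ← Complex.cpow_neg] at this
    rw [← this, ← integral_indicator measurableSet_Ioi]
    congr 1
    ext s
    rcases lt_or_ge 0 s with hs | hs
    · rw [indicator_of_mem (mem_Ioi.mpr hs), posPow_pos hs]; simp
    · rw [posPow_nonpos hs, indicator_of_notMem (by simpa using hs)]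
      simp
  have ht : Tendsto (fun x : ℝ => (x : ℂ)) (𝓝[>] 1) (𝓝[≠] 1) := by
    refine tendsto_nhdsWithin_iff.mpr ⟨?_, ?_⟩
    · exact (Complex.continuous_ofReal.tendsto' 1 1 (by simp)).mono_left nhdsWithin_le_nhds
    · filter_upwards [self_mem_nhdsWithin] with x hx
      have : (1 : ℝ) < x := hx
      simpa using this.ne'
  refine ht.frequently (Eventually.frequently ?_)
  filter_upwards [self_mem_nhdsWithin] with x hx
  exact key x (lt_trans one_pos hx)

lemma integrableOn_posPow (d : ℂ) (hd : -1 < d.re) (A : ℝ) :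
    IntegrableOn (fun s : ℝ => posPow s d) (Iic A) := by
  have h := (integrable_posPow_exp d 1 hd (by simp)).norm.mul_const (Real.exp A)
  refine (h.integrableOn (s := Iic A)).mono' (measurable_posPow d).aestronglyMeasurable ?_
  refine (ae_restrict_iff' measurableSet_Iic).mpr (Eventually.of_forall fun s hs => ?_)
  have hs : s ≤ A := hs
  rw [norm_mul, Complex.norm_exp, mul_assoc, ← Real.exp_add]
  refine le_mul_of_one_le_right (norm_nonneg _) (Real.one_le_exp ?_)
  simpa using hs

lemma integrable_diff (d : ℂ) (hd1 : -1 < d.re) (hd2 : d.re < 0) (t : ℝ) :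
    Integrable (fun s : ℝ => posPow (t + s) d - posPow s d) := by
  have hd0 : d ≠ 0 := by rintro rfl; simp at hd2
  rw [← integrableOn_univ, ← Iic_union_Ioi (a := 2 * |t| + 1), integrableOn_union]
  constructor
  · refine Integrable.sub ?_ (integrableOn_posPow d hd1 _)
    have := (measurePreserving_add_left volume t).integrableOn_comp_preimage
      (MeasurableEquiv.addLeft t).measurableEmbedding (f := fun s => posPow s d)
      (s := Iic (t + (2 * |t| + 1)))
    have h2 := this.mpr (integrableOn_posPow d hd1 _)
    simpa [Function.comp_def, IntegrableOn] using h2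
  · have h := ((integrableOn_Ioi_rpow_of_lt (a := d.re - 1) (c := 2 * |t| + 1) (by linarith)
      (by positivity)).const_mul (‖d‖ * (1 / 2 : ℝ) ^ (d.re - 1) * |t|))
    refine h.mono' ?_ ?_
    · exact (((measurable_posPow d).comp (measurable_const_add t)).sub
        (measurable_posPow d)).aestronglyMeasurable
    · refine (ae_restrict_iff' measurableSet_Ioi).mpr (Eventually.of_forall fun s hs => ?_)
      have hs : 2 * |t| + 1 < s := hs
      have h0 := abs_nonneg t
      have h1 := neg_abs_le t
      have hs0 : 0 < s := by linarith
      have hs1 : s / 2 < t + s := by linarith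
      rw [posPow_pos (by linarith), posPow_pos hs0]
      have := Convex.norm_image_sub_le_of_norm_hasDerivWithin_le (s := Ioi (s / 2))
        (f := fun y : ℝ => (y : ℂ) ^ d) (f' := fun y : ℝ => d * (y : ℂ) ^ (d - 1))
        (C := ‖d‖ * (s / 2) ^ (d.re - 1)) (x := s) (y := t + s) ?_ ?_ (convex_Ioi _)
        (by simpa using hs0) hs1
      · refine this.trans (le_of_eq ?_)
        rw [add_sub_cancel_right, Real.norm_eq_abs, div_eq_mul_one_div s 2,
          Real.mul_rpow hs0.le (by norm_num)]
        ring
      · intro y hy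
        have hy : s / 2 < y := hy
        exact (hasDerivAt_ofReal_cpow_const (by linarith) hd0).hasDerivWithinAt
      · intro y hy
        have hy : s / 2 < y := hy
        have hy0 : 0 < y := by linarith
        rw [norm_mul, Complex.norm_cpow_eq_rpow_re_of_pos hy0]
        refine mul_le_mul_of_nonneg_left ?_ (norm_nonneg _)
        simp only [Complex.sub_re, Complex.one_re]
        exact Real.rpow_le_rpow_of_nonpos (by linarith) hy.le (by linarith)

lemma integrable_diff' (d : ℂ) (hd1 : -1 < d.re) (hd2 : d.re < 0) (t : ℝ) :
    Integrable (fun u : ℝ => posPow (t - u) d - posPow (-u) d) := by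
  simpa [sub_eq_add_neg] using (integrable_diff d hd1 hd2 t).comp_neg

lemma shifted (d r : ℂ) (hd : -1 < d.re) (hr : 0 < r.re) (t : ℝ) :
    Integrable (fun u : ℝ => Complex.exp (r * u) * posPow (t - u) d) ∧
    ∫ u : ℝ, Complex.exp (r * u) * posPow (t - u) d =
      Complex.exp (r * t) * (r ^ (-(d + 1)) * Complex.Gamma (d + 1)) := by
  have e : (fun u : ℝ => Complex.exp (r * u) * posPow (t - u) d) =
      fun u : ℝ => (fun s : ℝ => Complex.exp (r * t) *
        (posPow s d * Complex.exp (-(r * s)))) (t - u) := by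
    ext u
    dsimp only
    rw [mul_left_comm, ← Complex.exp_add, mul_comm]
    congr 2
    push_cast; ring
  rw [e]
  constructor
  · exact ((integrable_posPow_exp d r hd hr).const_mul _).comp_sub_left t
  · rw [integral_sub_left_eq_self (fun s : ℝ => Complex.exp (r * t) *
        (posPow s d * Complex.exp (-(r * s)))) volume t, integral_const_mul, laplace d r hd hr]

lemma reg_formula (d r : ℂ) (hd : -1 < d.re) (hr : 0 < r.re) (t : ℝ) :
    ∫ u : ℝ, Complex.exp (r * u) * (posPow (t - u) d - posPow (-u) d) =
      (Complex.exp (r * t) - 1) * (r ^ (-(d + 1)) * Complex.Gamma (d + 1)) := by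
  obtain ⟨a1, a2⟩ := shifted d r hd hr t
  obtain ⟨b1, b2⟩ := shifted d r hd hr 0
  simp only [zero_sub, Complex.ofReal_zero, mul_zero, Complex.exp_zero, one_mul] at b1 b2
  simp_rw [mul_sub]
  rw [integral_sub a1 b1, a2, b2]; ring

lemma limit_formula (d : ℂ) (hd1 : -1 < d.re) (hd2 : d.re < 0) (t x : ℝ) (hx : x ≠ 0) :
    ∫ u : ℝ, Complex.exp (Complex.I * u * x) * (posPow (t - u) d - posPow (-u) d) =
      (Complex.exp (Complex.I * x * t) - 1) *
        ((Complex.I * x) ^ (-(d + 1)) * Complex.Gamma (d + 1)) := by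
  have hint := integrable_diff' d hd1 hd2 t
  have T1 : Tendsto (fun ε : ℝ => ∫ u : ℝ, Complex.exp ((ε + Complex.I * x) * u) *
      (posPow (t - u) d - posPow (-u) d)) (𝓝[>] 0)
      (𝓝 (∫ u : ℝ, Complex.exp (Complex.I * u * x) * (posPow (t - u) d - posPow (-u) d))) := by
    refine tendsto_integral_filter_of_dominated_convergence
      (fun u => Real.exp |t| * ‖posPow (t - u) d - posPow (-u) d‖) ?_ ?_ (hint.norm.const_mul _) ?_
    · exact Eventually.of_forall fun ε =>
        AEStronglyMeasurable.mul (by fun_prop) hint.aestronglyMeasurable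
    · filter_upwards [Ioc_mem_nhdsGT (zero_lt_one (α := ℝ))] with ε hε
      refine Eventually.of_forall fun u => ?_
      rw [norm_mul]
      rcases le_or_gt u |t| with hu | hu
      · refine mul_le_mul_of_nonneg_right ?_ (norm_nonneg _)
        rw [Complex.norm_exp, Real.exp_le_exp]
        have h0 := abs_nonneg t
        have : ((ε + Complex.I * x) * (u : ℂ)).re = ε * u := by simp
        rw [this]
        nlinarith [hε.1, hε.2]
      · have := le_abs_self t
        have := abs_nonneg t
        rw [posPow_nonpos (by linarith), posPow_nonpos (by linarith)]; simp
    · refine Eventually.of_forall fun u => ?_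
      refine Tendsto.mul_const _ (Tendsto.mono_left ?_ nhdsWithin_le_nhds)
      refine Continuous.tendsto' (by fun_prop) _ _ ?_
      congr 1; push_cast; ring
  have T2 : Tendsto (fun ε : ℝ => (Complex.exp ((ε + Complex.I * x) * t) - 1) *
        ((ε + Complex.I * x) ^ (-(d + 1)) * Complex.Gamma (d + 1))) (𝓝[>] 0)
      (𝓝 ((Complex.exp (Complex.I * x * t) - 1) *
        ((Complex.I * x) ^ (-(d + 1)) * Complex.Gamma (d + 1)))) := by
    refine Tendsto.mono_left ?_ nhdsWithin_le_nhds
    have hc : ContinuousAt (fun ε : ℝ => (Complex.exp ((ε + Complex.I * x) * t) - 1) *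
        ((ε + Complex.I * x) ^ (-(d + 1)) * Complex.Gamma (d + 1))) 0 := by
      refine ContinuousAt.mul (by fun_prop) (ContinuousAt.mul ?_ continuousAt_const)
      refine ContinuousAt.cpow (by fun_prop) continuousAt_const (Or.inr ?_)
      simpa using hx
    simpa using hc.tendsto
  refine tendsto_nhds_unique T1 (T2.congr' ?_)
  filter_upwards [self_mem_nhdsWithin] with ε hε
  exact (reg_formula d _ hd1 (by simpa using hε) t).symm

lemma cpow_I_mul (d : ℂ) (x : ℝ) (hx : x ≠ 0) :
    (Complex.I * x) ^ (-(d + 1)) = (1 / (Complex.I * x)) * Complex.exp (-d * Real.log |x|) *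
        Complex.exp (-(Real.sign x : ℂ) * Complex.I * Real.pi * d / 2) := by
  have hne : Complex.I * (x : ℂ) ≠ 0 := by simpa using hx
  have hlog : Complex.log (Complex.I * x) =
      Real.log |x| + (Real.sign x : ℂ) * (Real.pi / 2) * Complex.I := by
    rw [Complex.log]
    congr 1
    · simp
    · congr 1
      rcases lt_or_gt_of_ne hx with h | h
      · rw [Real.sign_of_neg h, mul_comm, show (x : ℂ) * Complex.I = ((-x : ℝ) : ℂ) * (-Complex.I) by
          push_cast; ring, Complex.arg_real_mul _ (by linarith), Complex.arg_neg_I]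
        push_cast; ring
      · rw [Real.sign_of_pos h, mul_comm, Complex.arg_real_mul _ h, Complex.arg_I]
        push_cast; ring
  rw [neg_add, Complex.cpow_add _ _ hne, Complex.cpow_neg_one, Complex.cpow_def_of_ne_zero hne,
    hlog, mul_comm, one_div, mul_assoc (Complex.I * (x : ℂ))⁻¹, ← Complex.exp_add]
  congr 2
  ring

/-- For `d ∈ ℂ` with `-1/2 < Re d < 0`, `t ∈ ℝ` and `x ≠ 0`, the function
`u ↦ (t-u)₊^d - (-u)₊^d` is Lebesgue integrable on `ℝ` and its Fourier-type integral
`∫ e^{iux} ((t-u)₊^d - (-u)₊^d) du` equals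
`((e^{itx} - 1)/(ix)) ⬝ |x|^{-d} ⬝ Γ(d+1) ⬝ e^{-sign(x) iπd/2}`. -/
theorem stmt0 (d : ℂ) (hd1 : -(1/2 : ℝ) < d.re) (hd2 : d.re < 0) (t : ℝ) (x : ℝ) (hx : x ≠ 0) :
    Integrable (fun u : ℝ => posPow (t - u) d - posPow (-u) d) ∧
    (∫ u : ℝ, Complex.exp (Complex.I * u * x) * (posPow (t - u) d - posPow (-u) d)) =
      ((Complex.exp (Complex.I * t * x) - 1) / (Complex.I * x)) *
        Complex.exp (-d * Real.log |x|) * Complex.Gamma (d + 1) *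
        Complex.exp (-(Real.sign x : ℂ) * Complex.I * Real.pi * d / 2) := by
  have hd : -1 < d.re := by linarith
  refine ⟨integrable_diff' d hd hd2 t, ?_⟩
  rw [limit_formula d hd hd2 t x hx, cpow_I_mul d x hx, mul_right_comm Complex.I (x : ℂ) (t : ℂ)]
  ring
end

section
/- Let d ∈ ℂ with 0 < Re(d) < 1/2, let t ∈ ℝ and let u ∈ ℝ \ {0, t}. Then the function x ↦ ((e^{itx} − 1)/(ix)) · |x|^{−d} · Γ(d+1) · e^{−sign(x)·iπd/2} is Lebesgue integrable on ℝ, and (1/(2π)) ∫_ℝ e^{−iux} ((e^{itx} − 1)/(ix)) · |x|^{−d} · Γ(d+1) · e^{−sign(x)·iπd/2} dx = (t−u)_+^d − (−u)_+^d. -/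
open MeasureTheory
open MeasureTheory
open Set Filter Topology

lemma aux_meas (s : ℂ) (g : ℝ → ℂ) (hg : Continuous g) :
    AEStronglyMeasurable (fun x : ℝ => (x:ℂ)^s * g x) (volume.restrict (Ioi 0)) := by
  refine ContinuousOn.aestronglyMeasurable (fun t ht ↦ ?_) measurableSet_Ioi
  exact ((Complex.continuousAt_ofReal_cpow_const _ _ (Or.inr (ne_of_gt ht))).mul
    hg.continuousAt).continuousWithinAt

lemma aux_norm (s r : ℂ) {x : ℝ} (hx : 0 < x) :
    ‖(x:ℂ)^s * Complex.exp (-(r * x))‖ = x ^ s.re * Real.exp (-r.re * x) := by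
  rw [norm_mul, Complex.norm_cpow_eq_rpow_re_of_pos hx, Complex.norm_exp]
  simp

lemma aux_real {s b : ℝ} (hs : -1 < s) (hb : 0 < b) :
    IntegrableOn (fun x : ℝ => x ^ s * Real.exp (-b * x)) (Ioi 0) := by
  simpa using integrableOn_rpow_mul_exp_neg_mul_rpow (p := 1) hs one_pos hb

lemma aux_int {s r : ℂ} (hs : -1 < s.re) (hr : 0 < r.re) :
    IntegrableOn (fun x : ℝ => (x:ℂ)^s * Complex.exp (-(r * x))) (Ioi 0) := by
  refine Integrable.mono' (aux_real hs hr) (aux_meas _ _ (by fun_prop)) ?_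
  refine (ae_restrict_mem measurableSet_Ioi).mono fun x hx => ?_
  exact (aux_norm s r hx).le

lemma aux_deriv {s r : ℂ} (hs : -1 < s.re) (hr : 0 < r.re) :
    DifferentiableAt ℂ (fun r : ℂ => ∫ x in Ioi (0:ℝ), (x:ℂ)^s * Complex.exp (-(r * x))) r := by
  have hU : {z : ℂ | r.re / 2 < z.re} ∈ 𝓝 r :=
    (isOpen_lt continuous_const Complex.continuous_re).mem_nhds (by simp; linarith)
  have := hasDerivAt_integral_of_dominated_loc_of_deriv_le (μ := volume.restrict (Ioi (0:ℝ)))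
    (F := fun (r : ℂ) (x : ℝ) => (x:ℂ)^s * Complex.exp (-(r * x)))
    (F' := fun (r : ℂ) (x : ℝ) => (x:ℂ)^s * (Complex.exp (-(r * x)) * (-x)))
    (x₀ := r) (bound := fun x => x ^ (s.re + 1) * Real.exp (-(r.re/2) * x)) hU
    (Eventually.of_forall fun z => aux_meas _ _ (by fun_prop)) (aux_int hs hr)
    (aux_meas _ _ (by fun_prop)) ?_ (aux_real (by linarith) (by linarith)) ?_
  · exact this.2.differentiableAt
  · refine (ae_restrict_mem measurableSet_Ioi).mono fun x (hx : 0 < x) z hz => ?_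
    have hz : r.re / 2 < z.re := hz
    rw [← mul_assoc, norm_mul, aux_norm s z hx, norm_neg, Complex.norm_real,
      Real.norm_of_nonneg hx.le, Real.rpow_add_one hx.ne']
    have : Real.exp (-z.re * x) ≤ Real.exp (-(r.re/2) * x) := by
      apply Real.exp_le_exp.2; nlinarith
    have h2 : 0 ≤ x ^ s.re := by positivity
    calc _ = x ^ s.re * x * Real.exp (-z.re * x) := by ring
      _ ≤ _ := by gcongr
  · refine (ae_restrict_mem measurableSet_Ioi).mono fun x (hx : 0 < x) z _ => ?_
    have h : HasDerivAt (fun z : ℂ => -(z * x)) (-x : ℂ) z := by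
      simpa using (hasDerivAt_mul_const (x := z) (x:ℂ)).fun_neg
    exact (h.cexp).const_mul _

lemma aux_gamma {s r : ℂ} (hs : 0 < s.re) (hr : 0 < r.re) :
    ∫ x in Ioi (0:ℝ), (x:ℂ)^(s-1) * Complex.exp (-(r * x)) = r ^ (-s) * Complex.Gamma s := by
  have hU : IsOpen {z : ℂ | 0 < z.re} := isOpen_lt continuous_const Complex.continuous_re
  have hA : AnalyticOnNhd ℂ (fun r : ℂ => ∫ x in Ioi (0:ℝ), (x:ℂ)^(s-1) * Complex.exp (-(r * x)))
      {z : ℂ | 0 < z.re} :=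
    DifferentiableOn.analyticOnNhd (fun z hz =>
      (aux_deriv (by simp [hs]) hz).differentiableWithinAt) hU
  have hB : AnalyticOnNhd ℂ (fun r : ℂ => r ^ (-s) * Complex.Gamma s) {z : ℂ | 0 < z.re} :=
    DifferentiableOn.analyticOnNhd (fun z hz =>
      ((differentiableAt_id.cpow_const (Or.inl hz)).mul_const _).differentiableWithinAt) hU
  refine hA.eqOn_of_preconnected_of_frequently_eq hB
    (convex_halfSpace_re_gt 0).isPreconnected (z₀ := ((1:ℝ):ℂ)) (by simp) ?_ hr
  have hr' : ∃ᶠ (x : ℝ) in 𝓝[≠] 1, ∫ y in Ioi (0:ℝ), (y:ℂ)^(s-1) * Complex.exp (-((x:ℂ) * y))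
      = (x:ℂ) ^ (-s) * Complex.Gamma s := by
    apply Eventually.frequently
    have : ∀ᶠ x : ℝ in 𝓝[≠] 1, 0 < x := nhdsWithin_le_nhds (lt_mem_nhds one_pos)
    filter_upwards [this] with x hx
    rw [Complex.integral_cpow_mul_exp_neg_mul_Ioi hs hx, one_div, Complex.inv_cpow,
      Complex.cpow_neg]
    rw [Complex.arg_ofReal_of_nonneg hx.le]; exact Real.pi_pos.ne
  refine Tendsto.frequently ?_ hr'
  refine tendsto_nhdsWithin_iff.2 ⟨?_, ?_⟩
  · exact (Complex.continuous_ofReal.tendsto 1).mono_left nhdsWithin_le_nhds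
  · filter_upwards [self_mem_nhdsWithin] with x hx
    simpa using hx

lemma aux_bd (w1 w0 : ℝ) {x : ℝ} (hx : 0 < x) :
    ‖Complex.exp (Complex.I * w1 * x) - Complex.exp (Complex.I * w0 * x)‖ ≤ |w1 - w0| * x ∧ 
    ‖Complex.exp (Complex.I * w1 * x) - Complex.exp (Complex.I * w0 * x)‖ ≤ 2 := by
  have e : ∀ w : ℝ, ‖Complex.exp (Complex.I * w * x)‖ = 1 := fun w => by
    rw [Complex.norm_exp]; simp
  constructor
  · have : Complex.exp (Complex.I * w1 * x) - Complex.exp (Complex.I * w0 * x) =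
      Complex.exp (Complex.I * w0 * x) * (Complex.exp (Complex.I * ((w1 - w0) * x : ℝ)) - 1) := by
      rw [mul_sub, ← Complex.exp_add]; push_cast; ring_nf
    rw [this, norm_mul, e, one_mul]
    refine Real.norm_exp_I_mul_ofReal_sub_one_le.trans ?_
    rw [Real.norm_eq_abs, abs_mul, abs_of_pos hx]
  · refine (norm_sub_le _ _).trans ?_
    rw [e, e]; norm_num

lemma aux_H {d : ℂ} (h0 : 0 < d.re) (h1 : d.re < 1) (w1 w0 : ℝ) :
    IntegrableOn (fun x : ℝ => (x:ℂ)^(-d-1) *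
      (Complex.exp (Complex.I * w1 * x) - Complex.exp (Complex.I * w0 * x))) (Ioi 0) := by
  have hm := aux_meas (-d-1) (fun x : ℝ =>
      (Complex.exp (Complex.I * w1 * x) - Complex.exp (Complex.I * w0 * x))) (by fun_prop)
  have hn : ∀ x : ℝ, 0 < x → ‖(x:ℂ)^(-d-1)‖ = x ^ (-d.re - 1) := fun x hx => by
    rw [Complex.norm_cpow_eq_rpow_re_of_pos hx]; simp
  rw [← Ioc_union_Ioi_eq_Ioi zero_le_one]
  refine IntegrableOn.union ?_ ?_
  · have := (intervalIntegral.intervalIntegrable_rpow' (a := 0) (b := 1)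
      (show -1 < -d.re by linarith)).const_mul |w1 - w0|
    rw [intervalIntegrable_iff_integrableOn_Ioc_of_le zero_le_one] at this
    refine Integrable.mono' this (hm.mono_set Ioc_subset_Ioi_self) ?_
    refine (ae_restrict_mem measurableSet_Ioc).mono fun x hx => ?_
    rw [norm_mul, hn x hx.1]
    calc _ ≤ x ^ (-d.re - 1) * (|w1 - w0| * x) := by
          have := hx.1
          gcongr; exact (aux_bd w1 w0 hx.1).1
      _ = _ := by
          rw [Real.rpow_sub_one hx.1.ne']; field_simp [hx.1.ne']
  · have := (integrableOn_Ioi_rpow_of_lt (show -d.re-1 < -1 by linarith) one_pos).mul_const 2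
    refine Integrable.mono' this (hm.mono_set (Ioi_subset_Ioi zero_le_one)) ?_
    refine (ae_restrict_mem measurableSet_Ioi).mono fun x (hx : 1 < x) => ?_
    have hx0 : 0 < x := by linarith
    rw [norm_mul, hn x hx0]
    gcongr; exact (aux_bd w1 w0 hx0).2

lemma aux_reg {d : ℂ} (h0 : 0 < d.re) (h1 : d.re < 1) (w1 w0 : ℝ) {ε : ℝ} (hε : 0 < ε) :
    ∫ x in Ioi (0:ℝ), (x:ℂ)^(-d-1) *
      (Complex.exp (Complex.I * w1 * x) - Complex.exp (Complex.I * w0 * x)) * Complex.exp (-(ε * x))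
    = Complex.Gamma (1-d) / d * ((ε - Complex.I * w0)^d - (ε - Complex.I * w1)^d) := by
  have hd : d ≠ 0 := by rintro rfl; simp at h0
  set a : ℂ := ε - Complex.I * w1 with ha
  set b : ℂ := ε - Complex.I * w0 with hb
  have har : 0 < a.re := by simp [ha, hε]
  have hbr : 0 < b.re := by simp [hb, hε]
  have ha0 : a ≠ 0 := by intro h; simp [h] at har
  have hb0 : b ≠ 0 := by intro h; simp [h] at hbr
  let u : ℝ → ℂ := fun x => Complex.exp (-(a * x)) - Complex.exp (-(b * x))
  let u' : ℝ → ℂ := fun x => Complex.exp (-(a * x)) * (-a) - Complex.exp (-(b * x)) * (-b)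
  let v : ℝ → ℂ := fun x => (x:ℂ)^(-d-1+1) / (-d-1+1)
  let v' : ℝ → ℂ := fun x => (x:ℂ)^(-d-1)
  have hueq : ∀ x : ℝ, u x = (Complex.exp (Complex.I * w1 * x) - Complex.exp (Complex.I * w0 * x))
      * Complex.exp (-(ε * x)) := fun x => by
    simp only [u, sub_mul, ← Complex.exp_add, ha, hb]; ring_nf
  have hE : ∀ c : ℂ, ∀ x : ℝ, HasDerivAt (fun x : ℝ => Complex.exp (-(c * x)))
      (Complex.exp (-(c * x)) * (-c)) x := fun c x => by
    have h : HasDerivAt (fun z : ℂ => -(c * z)) (-c : ℂ) x := by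
      simpa using (hasDerivAt_const_mul (x := (x:ℂ)) c).fun_neg
    exact (h.cexp).comp_ofReal
  have hu : ∀ x ∈ Ioi (0:ℝ), HasDerivAt u (u' x) x := fun x _ => (hE a x).sub (hE b x)
  have hv : ∀ x ∈ Ioi (0:ℝ), HasDerivAt v (v' x) x := fun x hx =>
    hasDerivAt_ofReal_cpow_const' (ne_of_gt hx) (by
      intro h; apply hd; linear_combination -h)
  have hexp1 : ∀ x : ℝ, 0 < x → ‖Complex.exp (-(ε * x))‖ ≤ 1 := fun x hx => by
    rw [Complex.norm_exp]; simp; positivity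
  have huc : Continuous u := by simp only [u]; fun_prop
  have huv' : IntegrableOn (u * v') (Ioi 0) := by
    refine Integrable.mono (aux_H h0 h1 w1 w0) ((huc.aestronglyMeasurable.mul
      (by simpa using aux_meas (-d-1) (fun _ => 1) continuous_const))) ?_
    refine (ae_restrict_mem measurableSet_Ioi).mono fun x (hx : 0 < x) => ?_
    rw [Pi.mul_apply, hueq, norm_mul, norm_mul, norm_mul, mul_comm]
    gcongr
    exact mul_le_of_le_one_right (norm_nonneg _) (hexp1 x hx)
  have hia := (aux_int (s := -d) (r := a) (by simp [h1]) har).const_mul (a/d)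
  have hib := (aux_int (s := -d) (r := b) (by simp [h1]) hbr).const_mul (b/d)
  have hu'veq : ∀ x, u' x * v x = a / d * ((x:ℂ)^(-d) * Complex.exp (-(a * x))) -
      b / d * ((x:ℂ)^(-d) * Complex.exp (-(b * x))) := fun x => by
    simp only [u', v, sub_add_cancel]; field_simp; ring
  have hu'v : IntegrableOn (u' * v) (Ioi 0) := by
    refine (hia.sub hib).congr (Eventually.of_forall fun x => ?_)
    exact (hu'veq x).symm
  have hvn : ∀ x : ℝ, 0 < x → ‖v x‖ = x ^ (-d.re) / ‖d‖ := fun x hx => by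
    simp only [v, sub_add_cancel, norm_div, norm_neg]
    rw [Complex.norm_cpow_eq_rpow_re_of_pos hx]; simp
  have hun : ∀ x : ℝ, 0 < x → ‖u x‖ ≤ |w1 - w0| * x ∧ ‖u x‖ ≤ 2 := fun x hx => by
    rw [hueq, norm_mul]
    have := aux_bd w1 w0 hx
    exact ⟨(mul_le_of_le_one_right (norm_nonneg _) (hexp1 x hx)).trans this.1,
      (mul_le_of_le_one_right (norm_nonneg _) (hexp1 x hx)).trans this.2⟩
  have hz : Tendsto (u * v) (𝓝[>] 0) (𝓝 0) := by
    have hlim : Tendsto (fun x : ℝ => |w1 - w0| / ‖d‖ * x ^ (1 - d.re)) (𝓝[>] 0) (𝓝 0) := by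
      have : Tendsto (fun x : ℝ => |w1 - w0| / ‖d‖ * x ^ (1 - d.re)) (𝓝 0)
          (𝓝 (|w1 - w0| / ‖d‖ * 0 ^ (1 - d.re))) :=
        ((Real.continuousAt_rpow_const 0 _ (Or.inr (by linarith))).tendsto).const_mul _
      rw [Real.zero_rpow (by linarith), mul_zero] at this
      exact this.mono_left nhdsWithin_le_nhds
    refine squeeze_zero_norm' ?_ hlim
    filter_upwards [self_mem_nhdsWithin] with x (hx : 0 < x)
    rw [Pi.mul_apply, norm_mul, hvn x hx]
    calc _ ≤ |w1 - w0| * x * (x ^ (-d.re) / ‖d‖) := by gcongr; exact (hun x hx).1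
      _ = _ := by
        rw [show 1 - d.re = -d.re + 1 by ring, Real.rpow_add_one hx.ne']; ring
  have hi : Tendsto (u * v) atTop (𝓝 0) := by
    have hlim : Tendsto (fun x : ℝ => 2 / ‖d‖ * x ^ (-d.re)) atTop (𝓝 0) := by
      simpa using (tendsto_rpow_neg_atTop h0).const_mul (2 / ‖d‖)
    refine squeeze_zero_norm' ?_ hlim
    filter_upwards [eventually_gt_atTop 0] with x hx
    rw [Pi.mul_apply, norm_mul, hvn x hx]
    calc _ ≤ 2 * (x ^ (-d.re) / ‖d‖) := by gcongr; exact (hun x hx).2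
      _ = _ := by ring
  have key := integral_Ioi_mul_deriv_eq_deriv_mul hu hv huv' hu'v hz hi
  have e1 : ∀ x : ℝ, (x:ℂ)^(-d-1) *
      (Complex.exp (Complex.I * w1 * x) - Complex.exp (Complex.I * w0 * x)) *
        Complex.exp (-(ε * x)) = u x * v' x := fun x => by rw [hueq]; simp only [v']; ring
  simp_rw [e1]
  rw [key]
  simp_rw [hu'veq]
  rw [integral_sub hia hib, integral_const_mul, integral_const_mul]
  have g : ∀ c : ℂ, 0 < c.re → ∫ x in Ioi (0:ℝ), (x:ℂ)^(-d) * Complex.exp (-(c * x)) =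
      c ^ d / c * Complex.Gamma (1 - d) := fun c hc => by
    have hc0 : c ≠ 0 := by intro h; simp [h] at hc
    have := aux_gamma (s := 1 - d) (r := c) (by simp [h1]) hc
    rw [show 1 - d - 1 = -d by ring, show -(1-d) = d - 1 by ring, Complex.cpow_sub _ _ hc0,
      Complex.cpow_one] at this
    exact this
  rw [g a har, g b hbr]
  field_simp; ring

lemma aux_lim {d : ℂ} (h0 : 0 < d.re) (h1 : d.re < 1) {w1 w0 : ℝ} (hw1 : w1 ≠ 0) (hw0 : w0 ≠ 0) :
    ∫ x in Ioi (0:ℝ), (x:ℂ)^(-d-1) *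
      (Complex.exp (Complex.I * w1 * x) - Complex.exp (Complex.I * w0 * x))
    = Complex.Gamma (1-d) / d * ((-(Complex.I * w0))^d - (-(Complex.I * w1))^d) := by
  have hc : ∀ w : ℝ, w ≠ 0 → Tendsto (fun ε : ℝ => ((ε:ℂ) - Complex.I * w)^d) (𝓝[>] 0)
      (𝓝 ((-(Complex.I * w))^d)) := fun w hw => by
    have : ContinuousAt (fun ε : ℝ => ((ε:ℂ) - Complex.I * w)^d) 0 := by
      refine ContinuousAt.cpow (by fun_prop) continuousAt_const ?_
      right; simpa using hw
    have h := this.tendsto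
    simp only [Complex.ofReal_zero, zero_sub] at h
    exact h.mono_left nhdsWithin_le_nhds
  have hR := ((hc w0 hw0).sub (hc w1 hw1)).const_mul (Complex.Gamma (1-d) / d)
  refine tendsto_nhds_unique ?_ hR
  have hL := tendsto_integral_filter_of_dominated_convergence (μ := volume.restrict (Ioi (0:ℝ)))
    (l := 𝓝[>] (0:ℝ))
    (F := fun (ε : ℝ) (x : ℝ) => (x:ℂ)^(-d-1) *
      (Complex.exp (Complex.I * w1 * x) - Complex.exp (Complex.I * w0 * x)) *
        Complex.exp (-(ε * x)))
    (f := fun x : ℝ => (x:ℂ)^(-d-1) *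
      (Complex.exp (Complex.I * w1 * x) - Complex.exp (Complex.I * w0 * x)))
    (fun x => ‖(x:ℂ)^(-d-1) *
      (Complex.exp (Complex.I * w1 * x) - Complex.exp (Complex.I * w0 * x))‖) 
    (Eventually.of_forall fun ε => (aux_H h0 h1 w1 w0).aestronglyMeasurable.mul
      (Continuous.aestronglyMeasurable (by fun_prop))) ?_ (aux_H h0 h1 w1 w0).norm ?_
  · refine hL.congr' ?_
    filter_upwards [self_mem_nhdsWithin] with ε (hε : 0 < ε)
    exact aux_reg h0 h1 w1 w0 hε
  · filter_upwards [self_mem_nhdsWithin] with ε (hε : 0 < ε)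
    refine (ae_restrict_mem measurableSet_Ioi).mono fun x (hx : 0 < x) => ?_
    rw [norm_mul]
    refine mul_le_of_le_one_right (norm_nonneg _) ?_
    rw [Complex.norm_exp]; simp; positivity
  · refine Eventually.of_forall fun x => ?_
    have : Continuous (fun ε : ℝ => (x:ℂ)^(-d-1) *
      (Complex.exp (Complex.I * w1 * x) - Complex.exp (Complex.I * w0 * x)) *
        Complex.exp (-(ε * x))) := by fun_prop
    have h := this.tendsto 0
    simp only [Complex.ofReal_zero, zero_mul, neg_zero, Complex.exp_zero, mul_one] at h
    exact h.mono_left nhdsWithin_le_nhds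

lemma aux_pow (d : ℂ) {x : ℝ} (hx : 0 < x) :
    (x:ℂ)^(-d-1) = Complex.exp (-d * Real.log x) / x := by
  have h : (x:ℂ) ≠ 0 := by exact_mod_cast hx.ne'
  rw [Complex.cpow_sub _ _ h, Complex.cpow_one, Complex.cpow_def_of_ne_zero h,
    ← Complex.ofReal_log hx.le, mul_comm]

noncomputable def auxF (d : ℂ) (t u : ℝ) (x : ℝ) : ℂ :=
  Complex.exp (-(Complex.I) * u * x) *
          (((Complex.exp (Complex.I * t * x) - 1) / (Complex.I * x)) *
            Complex.exp (-d * Real.log |x|) * Complex.Gamma (d + 1) *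
            Complex.exp (-(Real.sign x : ℂ) * Complex.I * Real.pi * d / 2))

lemma auxF_pos (d : ℂ) (t u : ℝ) {x : ℝ} (hx : 0 < x) : auxF d t u x =
    (Complex.Gamma (d+1) * Complex.exp (-(Complex.I * Real.pi * d / 2)) / Complex.I) *
    ((x:ℂ)^(-d-1) * (Complex.exp (Complex.I * (t - u : ℝ) * x) -
      Complex.exp (Complex.I * (-u : ℝ) * x))) := by
  have h : (x:ℂ) ≠ 0 := by exact_mod_cast hx.ne'
  have e1 : Complex.exp (Complex.I * (t - u : ℝ) * x) =
      Complex.exp (-Complex.I * u * x) * Complex.exp (Complex.I * t * x) := by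
    rw [← Complex.exp_add]; push_cast; ring_nf
  have e2 : Complex.exp (Complex.I * (-u : ℝ) * x) = Complex.exp (-Complex.I * u * x) := by
    push_cast; ring_nf
  have e3 : -((1:ℝ):ℂ) * Complex.I * Real.pi * d / 2 = -(Complex.I * Real.pi * d / 2) := by
    push_cast; ring
  rw [aux_pow d hx, e1, e2, auxF, abs_of_pos hx, Real.sign_of_pos hx, e3]
  field_simp

lemma auxF_neg (d : ℂ) (t u : ℝ) {x : ℝ} (hx : 0 < x) : auxF d t u (-x) =
    -(Complex.Gamma (d+1) * Complex.exp (Complex.I * Real.pi * d / 2) / Complex.I) *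
    ((x:ℂ)^(-d-1) * (Complex.exp (Complex.I * (-(t - u) : ℝ) * x) -
      Complex.exp (Complex.I * (u : ℝ) * x))) := by
  have h : (x:ℂ) ≠ 0 := by exact_mod_cast hx.ne'
  have e1 : Complex.exp (Complex.I * (-(t - u) : ℝ) * x) =
      Complex.exp (-Complex.I * u * (-x : ℝ)) * Complex.exp (Complex.I * t * (-x : ℝ)) := by
    rw [← Complex.exp_add]; push_cast; ring_nf
  have e2 : Complex.exp (Complex.I * (u : ℝ) * x) = Complex.exp (-Complex.I * u * (-x : ℝ)) := by
    push_cast; ring_nf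
  have e3 : -((-1:ℝ):ℂ) * Complex.I * Real.pi * d / 2 = (Complex.I * Real.pi * d / 2) := by
    push_cast; ring
  rw [aux_pow d hx, e1, e2, auxF, abs_neg, abs_of_pos hx, Real.sign_of_neg (neg_neg_of_pos hx), e3]
  rw [Complex.ofReal_neg]
  field_simp

lemma auxF_int1 {d : ℂ} (h0 : 0 < d.re) (h1 : d.re < 1) (t u : ℝ) :
    IntegrableOn (auxF d t u) (Ioi 0) := by
  refine ((aux_H h0 h1 (t-u) (-u)).const_mul
    (Complex.Gamma (d+1) * Complex.exp (-(Complex.I * Real.pi * d / 2)) / Complex.I)).congr ?_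
  refine (ae_restrict_mem measurableSet_Ioi).mono fun x hx => ?_
  exact (auxF_pos d t u hx).symm

lemma auxF_int2 {d : ℂ} (h0 : 0 < d.re) (h1 : d.re < 1) (t u : ℝ) :
    IntegrableOn (auxF d t u) (Iic 0) := by
  rw [integrableOn_Iic_iff_integrableOn_Iio]
  have : IntegrableOn (fun x => auxF d t u (-x)) (Ioi (-0)) := by
    rw [neg_zero]
    refine ((aux_H h0 h1 (-(t-u)) u).const_mul
      (-(Complex.Gamma (d+1) * Complex.exp (Complex.I * Real.pi * d / 2) / Complex.I))).congr ?_
    refine (ae_restrict_mem measurableSet_Ioi).mono fun x hx => ?_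
    exact (auxF_neg d t u hx).symm
  simpa using this.comp_neg_Iio

lemma auxF_int {d : ℂ} (h0 : 0 < d.re) (h1 : d.re < 1) (t u : ℝ) :
    Integrable (auxF d t u) := by
  rw [← integrableOn_univ, ← Iic_union_Ioi (a := (0:ℝ))]
  exact (auxF_int2 h0 h1 t u).union (auxF_int1 h0 h1 t u)

lemma aux_g (d : ℂ) {w : ℝ} (hw : w ≠ 0) :
    Complex.exp (Complex.I * Real.pi * d / 2) * (Complex.I * w)^d -
      Complex.exp (-(Complex.I * Real.pi * d / 2)) * (-(Complex.I * w))^d =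
    2 * Complex.I * Complex.sin (Real.pi * d) * posPow w d := by
  have hI : ∀ y : ℝ, 0 < y → (Complex.I * y)^d =
      Complex.exp (Complex.I * Real.pi * d / 2) * Complex.exp (d * Real.log y) := fun y hy => by
    rw [Complex.cpow_def_of_ne_zero (by simp [hy.ne']), mul_comm Complex.I,
      Complex.log_ofReal_mul hy Complex.I_ne_zero, Complex.log_I, ← Complex.exp_add]
    ring_nf
  have hI' : ∀ y : ℝ, 0 < y → (-(Complex.I * y))^d =
      Complex.exp (-(Complex.I * Real.pi * d / 2)) * Complex.exp (d * Real.log y) := fun y hy => by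
    rw [Complex.cpow_def_of_ne_zero (by simp [hy.ne']), mul_comm Complex.I, ← mul_neg,
      Complex.log_ofReal_mul hy (by simp), Complex.log_neg_I, ← Complex.exp_add]
    ring_nf
  rcases lt_or_gt_of_ne hw with h | h
  · have hp : 0 < -w := by linarith
    have e1 : Complex.I * (w:ℂ) = -(Complex.I * ((-w : ℝ) : ℂ)) := by push_cast; ring
    have e2 : Complex.exp (-(Complex.I * Real.pi * d / 2)) * Complex.exp (Complex.I * Real.pi * d / 2)
        = 1 := by rw [← Complex.exp_add]; simp
    rw [e1, neg_neg, hI _ hp, hI' _ hp, posPow, if_neg (by linarith)]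
    ring
  · have e1 : Complex.exp (Complex.I * Real.pi * d / 2) * Complex.exp (Complex.I * Real.pi * d / 2)
        = Complex.exp (Real.pi * d * Complex.I) := by rw [← Complex.exp_add]; ring_nf
    have e2 : Complex.exp (-(Complex.I * Real.pi * d / 2)) *
        Complex.exp (-(Complex.I * Real.pi * d / 2))
        = Complex.exp (-(Real.pi * d) * Complex.I) := by rw [← Complex.exp_add]; ring_nf
    rw [hI _ h, hI' _ h, posPow, if_pos h, Complex.sin, ← mul_assoc, ← mul_assoc, e1, e2]
    linear_combination (Complex.exp (d * Real.log w) *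
      (Complex.exp (Real.pi * d * Complex.I) - Complex.exp (-(Real.pi * d) * Complex.I))) *
        Complex.I_sq

lemma aux_sin {d : ℂ} (h0 : 0 < d.re) (h1 : d.re < 1) : Complex.sin (Real.pi * d) ≠ 0 := by
  intro h
  have hg := Complex.Gamma_mul_Gamma_one_sub d
  rw [h, div_zero] at hg
  exact mul_ne_zero (Complex.Gamma_ne_zero_of_re_pos h0)
    (Complex.Gamma_ne_zero_of_re_pos (by simp [h1])) hg

/-- For `d ∈ ℂ` with `0 < Re d < 1/2`, `t ∈ ℝ` and `u ∉ {0, t}`, the function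
`x ↦ ((e^{itx} - 1)/(ix)) |x|^{-d} Γ(d+1) e^{-sign(x) iπd/2}` is Lebesgue integrable on `ℝ`
and `(1/(2π)) ∫ e^{-iux} ((e^{itx} - 1)/(ix)) |x|^{-d} Γ(d+1) e^{-sign(x) iπd/2} dx
  = (t-u)₊^d - (-u)₊^d`. -/
theorem stmt2 (d : ℂ) (hd1 : 0 < d.re) (hd2 : d.re < 1/2) (t u : ℝ) (hu : u ≠ 0) (hut : u ≠ t) :
    Integrable (fun x : ℝ =>
      ((Complex.exp (Complex.I * t * x) - 1) / (Complex.I * x)) *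
        Complex.exp (-d * Real.log |x|) * Complex.Gamma (d + 1) *
        Complex.exp (-(Real.sign x : ℂ) * Complex.I * Real.pi * d / 2)) ∧
    (1 / (2 * (Real.pi : ℂ))) *
        ∫ x : ℝ, Complex.exp (-(Complex.I) * u * x) *
          (((Complex.exp (Complex.I * t * x) - 1) / (Complex.I * x)) *
            Complex.exp (-d * Real.log |x|) * Complex.Gamma (d + 1) *
            Complex.exp (-(Real.sign x : ℂ) * Complex.I * Real.pi * d / 2)) =
      posPow (t - u) d - posPow (-u) d := by
  have h1 : d.re < 1 := by linarith
  have hd : d ≠ 0 := by rintro rfl; simp at hd1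
  refine ⟨?_, ?_⟩
  · have := auxF_int hd1 h1 t 0
    refine this.congr (Eventually.of_forall fun x => ?_)
    simp [auxF]
  · change (1 / (2 * (Real.pi : ℂ))) * ∫ x : ℝ, auxF d t u x = _
    rw [← intervalIntegral.integral_Iic_add_Ioi (auxF_int2 hd1 h1 t u) (auxF_int1 hd1 h1 t u)]
    have hw : t - u ≠ 0 := sub_ne_zero.2 hut.symm
    have i1 : ∫ x in Ioi (0:ℝ), auxF d t u x = _ :=
      (setIntegral_congr_fun measurableSet_Ioi fun x hx => auxF_pos d t u hx).trans
        (integral_const_mul _ _)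
    have i2 : ∫ x in Iic (0:ℝ), auxF d t u x = (-(Complex.Gamma (d+1) * Complex.exp (Complex.I * Real.pi * d / 2) / Complex.I)) *
        ∫ x in Ioi (0:ℝ), (x:ℂ)^(-d-1) * (Complex.exp (Complex.I * (-(t - u) : ℝ) * x) -
          Complex.exp (Complex.I * (u : ℝ) * x)) := by
      have h := integral_comp_neg_Ioi 0 (auxF d t u)
      rw [neg_zero] at h
      exact h.symm.trans
        ((setIntegral_congr_fun measurableSet_Ioi fun x hx => auxF_neg d t u hx).trans
        (integral_const_mul _ _))
    rw [i1, i2, aux_lim hd1 h1 hw (neg_ne_zero.2 hu), aux_lim hd1 h1 (neg_ne_zero.2 hw) hu]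
    have g1 := aux_g d hw
    have g0 := aux_g d (neg_ne_zero.2 hu)
    have hs := aux_sin hd1 h1
    have hG := Complex.Gamma_mul_Gamma_one_sub d
    rw [eq_div_iff hs] at hG
    have hpi : (Real.pi : ℂ) ≠ 0 := by exact_mod_cast Real.pi_ne_zero
    have r1 : -(Complex.I * ((-(t-u) : ℝ) : ℂ)) = Complex.I * ((t-u : ℝ) : ℂ) := by
      push_cast; ring
    have r0 : -(Complex.I * (u : ℂ)) = Complex.I * ((-u : ℝ) : ℂ) := by
      push_cast; ring
    rw [r1, r0, Complex.Gamma_add_one d hd]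
    generalize posPow (t-u) d = P1 at *
    generalize posPow (-u) d = P0 at *
    generalize (Complex.I * ((t-u : ℝ) : ℂ))^d = A1 at *
    generalize (-(Complex.I * ((t-u : ℝ) : ℂ)))^d = B1 at *
    generalize (Complex.I * ((-u : ℝ) : ℂ))^d = A0 at *
    generalize (-(Complex.I * ((-u : ℝ) : ℂ)))^d = B0 at *
    generalize Complex.exp (Complex.I * Real.pi * d / 2) = E at *
    generalize Complex.exp (-(Complex.I * Real.pi * d / 2)) = E' at *
    have hI := Complex.I_ne_zero
    field_simp
    linear_combination Complex.Gamma d * Complex.Gamma (1-d) * (g1 - g0) +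
      2 * Complex.I * (P1 - P0) * hG
end

section
/- Let t ∈ ℝ \ {0} and u ∈ ℝ \ {0, t}. Then the improper integral lim_{T→∞} ∫_0^T e^{−iux} ((e^{itx} − 1)/(ix)) dx exists and equals i·log(|t−u|/|u|) + (π/2)·(sign(t−u) − sign(−u)). -/
open MeasureTheory Filter

open Complex in
lemma aux1 (c : ℂ) (T : ℝ) (hw : ∀ s ∈ Set.uIcc (0:ℝ) 1, (1 + s * c) ≠ 0) :
    ∫ x in (0:ℝ)..T, (exp (-(1 + c) * x) - exp (-x)) / x =
      ∫ s in (0:ℝ)..1, -(c * ((1 - exp (-(1 + s * c) * T)) / (1 + s * c))) := by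
  have h1 : ∀ x : ℝ, x ≠ 0 → (exp (-(1 + c) * x) - exp (-x)) / x =
      ∫ s in (0:ℝ)..1, -c * exp (-(1 + s * c) * x) := by
    intro x hx
    have hx' : (x:ℂ) ≠ 0 := by exact_mod_cast hx
    have hd : ∀ s ∈ Set.uIcc (0:ℝ) 1, HasDerivAt (fun s : ℝ => exp (-(1 + s * c) * x) / x)
        (-c * exp (-(1 + s * c) * x)) s := by
      intro s _
      have h0 : HasDerivAt (fun s : ℝ => (s : ℂ)) 1 s := Complex.ofRealCLM.hasDerivAt
      have := (((((h0.mul_const c).const_add 1).neg).mul_const (x:ℂ)).cexp).div_const (x:ℂ)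
      refine HasDerivAt.congr_deriv this ?_
      change exp (-(1 + s * c) * x) * (-(1 * c) * x) / x = _
      field_simp
    rw [intervalIntegral.integral_eq_sub_of_hasDerivAt hd
      (Continuous.intervalIntegrable (by fun_prop) _ _)]
    simp [sub_div]
  have h2 : ∫ x in (0:ℝ)..T, (exp (-(1 + c) * x) - exp (-x)) / x =
      ∫ x in (0:ℝ)..T, ∫ s in (0:ℝ)..1, -c * exp (-(1 + s * c) * x) := by
    apply intervalIntegral.integral_congr_ae
    have : ∀ᵐ x : ℝ, x ≠ 0 := by
      simp [ae_iff]
    filter_upwards [this] with x hx _ using h1 x hx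
  rw [h2, MeasureTheory.intervalIntegral_intervalIntegral_swap]
  · apply intervalIntegral.integral_congr
    intro s hs
    have := hw s hs
    have h3 : -(1 + s * c) ≠ 0 := neg_ne_zero.mpr this
    simp only
    rw [intervalIntegral.integral_const_mul, integral_exp_mul_complex h3]
    simp only [ofReal_zero, mul_zero, exp_zero]
    field_simp
    ring
  · have hc : Continuous (Function.uncurry
        fun x s : ℝ => -c * exp (-(1 + (s:ℂ) * c) * (x:ℂ))) := by
      unfold Function.uncurry; fun_prop
    have hK : IsCompact (Set.uIcc (0:ℝ) T ×ˢ Set.uIcc (0:ℝ) 1) := isCompact_uIcc.prod isCompact_uIcc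
    exact (hc.continuousOn.integrableOn_compact hK).mono_set
      (Set.prod_mono Set.uIoc_subset_uIcc Set.uIoc_subset_uIcc)

open Complex in
lemma aux2 (a : ℝ) (ha : a ≠ 0) :
    Tendsto (fun T : ℝ => ∫ x in (0:ℝ)..T, (exp (I * a * x) - exp (-x)) / x)
      atTop (nhds (-((Real.log |a| : ℂ) - I * (Real.pi / 2 * Real.sign a : ℝ)))) := by
  set c : ℂ := -I * a - 1 with hc
  have hre : ∀ s : ℝ, (1 + s * c).re = 1 - s := by intro s; simp [hc]; ring
  have him : ∀ s : ℝ, (1 + s * c).im = - s * a := by intro s; simp [hc]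
  have hsl : ∀ s ∈ Set.uIcc (0:ℝ) 1, (1 + s * c) ∈ slitPlane := by
    intro s hs
    rw [Set.uIcc_of_le zero_le_one] at hs
    rw [mem_slitPlane_iff, hre, him]
    rcases hs.2.lt_or_eq with h | h
    · left; linarith
    · right; subst h; simpa using ha
  have hw : ∀ s ∈ Set.uIcc (0:ℝ) 1, (1 + s * c) ≠ 0 := fun s hs => slitPlane_ne_zero (hsl s hs)
  have hcont : ContinuousOn (fun s : ℝ => c / (1 + s * c)) (Set.uIcc (0:ℝ) 1) :=
    ContinuousOn.div (by fun_prop) (by fun_prop) hw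
  have hint : ∫ s in (0:ℝ)..1, -(c / (1 + s * c)) =
      -((Real.log |a| : ℂ) - I * (Real.pi / 2 * Real.sign a : ℝ)) := by
    have hd : ∀ s ∈ Set.uIcc (0:ℝ) 1, HasDerivAt (fun s : ℝ => log (1 + s * c))
        (c / (1 + s * c)) s := by
      intro s hs
      have h0 : HasDerivAt (fun s : ℝ => (s : ℂ)) 1 s := Complex.ofRealCLM.hasDerivAt
      have := ((h0.mul_const c).const_add 1).clog_real (hsl s hs)
      simpa using this
    rw [intervalIntegral.integral_neg, intervalIntegral.integral_eq_sub_of_hasDerivAt hd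
      hcont.intervalIntegrable]
    have e : 1 + ((1:ℝ):ℂ) * c = -I * a := by rw [hc]; push_cast; ring
    rw [e]
    simp only [ofReal_zero, zero_mul, add_zero, log_one, sub_zero, neg_inj]
    apply Complex.ext
    · simp [log_re]
    · rw [log_im]
      rcases ha.lt_or_gt with h | h
      · rw [Real.sign_of_neg h, show -I * (a:ℂ) = ((-a : ℝ) : ℂ) * I by push_cast; ring,
          arg_real_mul _ (by linarith), arg_I]
        simp
      · rw [Real.sign_of_pos h, show -I * (a:ℂ) = (a : ℂ) * (-I) by ring,
          arg_real_mul _ h, arg_neg_I]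
        simp
  rw [← hint]
  have hfun : (fun T : ℝ => ∫ x in (0:ℝ)..T, (exp (I * a * x) - exp (-x)) / x) =
      fun T : ℝ => ∫ s in (0:ℝ)..1, -(c * ((1 - exp (-(1 + s * c) * T)) / (1 + s * c))) := by
    funext T
    rw [← aux1 c T hw]
    have : -(1 + c) = I * a := by rw [hc]; ring
    rw [this]
  rw [hfun]
  apply intervalIntegral.tendsto_integral_filter_of_dominated_convergence
    (fun s => 2 * ‖c / (1 + s * c)‖)
  · refine Eventually.of_forall fun T => ?_
    apply ContinuousOn.aestronglyMeasurable _ measurableSet_uIoc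
    apply ContinuousOn.mono _ Set.uIoc_subset_uIcc
    exact (continuousOn_const.mul (ContinuousOn.div (by fun_prop) (by fun_prop) hw)).neg
  · filter_upwards [eventually_ge_atTop 0] with T hT
    refine Eventually.of_forall fun s hs => ?_
    rw [Set.uIoc_of_le zero_le_one] at hs
    have hb : ‖1 - exp (-(1 + s * c) * T)‖ ≤ 2 := by
      refine (norm_sub_le _ _).trans ?_
      rw [norm_exp, norm_one]
      have : (-(1 + s * c) * T).re ≤ 0 := by
        rw [re_mul_ofReal, neg_re, hre]
        have := hs.2
        nlinarith
      have := Real.exp_le_one_iff.mpr this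
      linarith
    rw [show -(c * ((1 - exp (-(1 + s * c) * T)) / (1 + s * c))) =
      -((1 - exp (-(1 + s * c) * T)) * (c / (1 + s * c))) by ring, norm_neg, norm_mul]
    gcongr
  · exact (hcont.norm.const_smul (2:ℝ)).intervalIntegrable
  · have : ∀ᵐ s : ℝ, s ≠ 1 := by simp [ae_iff]
    filter_upwards [this] with s hs1 hs
    rw [Set.uIoc_of_le zero_le_one] at hs
    have hs2 : s < 1 := lt_of_le_of_ne hs.2 hs1
    have hlim : Tendsto (fun T : ℝ => exp (-(1 + s * c) * T)) atTop (nhds 0) := by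
      rw [tendsto_exp_nhds_zero_iff]
      simp only [re_mul_ofReal, neg_re, hre]
      exact tendsto_id.const_mul_atTop_of_neg (by linarith)
    have := (((hlim.const_sub 1).div_const (1 + s * c)).const_mul c).neg
    convert this using 2
    ring

open Complex in
lemma aux3 (a T : ℝ) : IntervalIntegrable
    (fun x : ℝ => (exp (I * a * x) - exp (-x)) / (x:ℂ)) volume 0 T := by
  set f : ℝ → ℂ := fun x => exp (I * a * x) - exp (-x) with hf
  have hd : Differentiable ℝ f := by
    have h0 : Differentiable ℝ (fun s : ℝ => (s : ℂ)) := Complex.ofRealCLM.differentiable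
    rw [hf]; fun_prop
  have hc : Continuous (dslope f 0) := by
    rw [continuous_iff_continuousAt]
    intro x
    by_cases hx : x = 0
    · subst hx; exact continuousAt_dslope_same.mpr (hd 0)
    · exact (continuousAt_dslope_of_ne hx).mpr (hd x).continuousAt
  refine (hc.intervalIntegrable 0 T).congr_ae ?_
  have : ∀ᵐ x : ℝ, x ≠ 0 := by simp [ae_iff]
  filter_upwards [ae_restrict_of_ae this] with x hx
  rw [dslope_of_ne _ hx, slope_def_module]
  simp [hf, div_eq_inv_mul]


/-- For `t ≠ 0` and `u ∉ {0, t}`, the improper integral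
`lim_{T→∞} ∫_0^T e^{-iux} ((e^{itx} - 1)/(ix)) dx` exists and equals
`i log(|t-u|/|u|) + (π/2)(sign(t-u) - sign(-u))`. -/
theorem stmt3 (t u : ℝ) (ht : t ≠ 0) (hu : u ≠ 0) (hut : u ≠ t) :
    Tendsto
      (fun T : ℝ => ∫ x in (0:ℝ)..T,
        Complex.exp (-(Complex.I) * u * x) *
          ((Complex.exp (Complex.I * t * x) - 1) / (Complex.I * x)))
      atTop
      (nhds (Complex.I * (Real.log (|t - u| / |u|) : ℂ) +
        ((Real.pi / 2 : ℝ) : ℂ) * ((Real.sign (t - u) - Real.sign (-u) : ℝ) : ℂ))) := by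
  have hb : -u ≠ 0 := neg_ne_zero.mpr hu
  have ha : t - u ≠ 0 := sub_ne_zero.mpr (Ne.symm hut)
  have key := ((aux2 (t - u) ha).sub (aux2 (-u) hb)).const_mul (-Complex.I)
  have hI : Complex.I * Complex.I = -1 := Complex.I_mul_I
  convert key using 1
  · funext T
    rw [← intervalIntegral.integral_sub (aux3 _ _) (aux3 _ _),
      ← intervalIntegral.integral_const_mul]
    apply intervalIntegral.integral_congr
    intro x _
    simp only
    have e1 : Complex.exp (Complex.I * ((t - u : ℝ) : ℂ) * x) =
        Complex.exp (-(Complex.I) * u * x) * Complex.exp (Complex.I * t * x) := by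
      rw [← Complex.exp_add]; congr 1; push_cast; ring
    have e2 : Complex.exp (Complex.I * ((-u : ℝ) : ℂ) * x) = Complex.exp (-(Complex.I) * u * x) := by
      congr 1; push_cast; ring
    rw [e1, e2, div_eq_mul_inv _ (Complex.I * (x:ℂ)), mul_inv, Complex.inv_I]
    ring
  · congr 1
    rw [Real.log_div (abs_ne_zero.mpr ha) (abs_ne_zero.mpr hu), abs_neg]
    push_cast
    linear_combination (Real.pi / 2 : ℂ) * ((Real.sign (t - u) : ℂ) - Real.sign (-u)) * hI
end

section
/- Let t ∈ ℝ \ {0} and u ∈ ℝ \ {0, t}, and let C denote the Euler–Mascheroni constant. Then the improper integral lim_{T→∞} ∫_0^T e^{−iux} ((e^{itx} − 1)/(ix)) · log(x) dx exists and equals −i·log(|t−u|/|u|)·(C + (1/2)·log(|t−u|·|u|)) − (π/2)·((C + log|t−u|)·sign(t−u) − (C + log|u|)·sign(−u)). -/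
open MeasureTheory Filter

lemma aux_N : Tendsto (fun T : ℝ => ∫ x in (0:ℝ)..T, Complex.exp (-(x:ℂ)) * (Real.log x : ℂ)) atTop
    (nhds (-(Real.eulerMascheroniConstant : ℂ))) := by
  have h := mellin_hasDerivAt_of_isBigO_rpow (E := ℂ) (a := 2) (b := 0) (s := 1)
    (f := fun x : ℝ => (Real.exp (-x) : ℂ)) ?_ ?_ (by norm_num) ?_ (by norm_num)
  · obtain ⟨h1, h2⟩ := h
    have h3 : mellin (fun x : ℝ => (Real.exp (-x) : ℂ)) =ᶠ[nhds 1] Complex.Gamma := by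
      have : ∀ᶠ s : ℂ in nhds 1, 0 < s.re :=
        (Complex.continuous_re.isOpen_preimage _ isOpen_Ioi).mem_nhds (by simp)
      filter_upwards [this] with s hs
      rw [Complex.Gamma_eq_integral hs, Complex.GammaIntegral_eq_mellin]
    have h4 := (h3.hasDerivAt_iff.1 h2).unique Complex.hasDerivAt_Gamma_one
    have h5 : IntegrableOn (fun x : ℝ => Complex.exp (-(x:ℂ)) * (Real.log x : ℂ)) (Set.Ioi 0) := by
      refine IntegrableOn.congr_fun h1 ?_ measurableSet_Ioi
      intro x hx
      simp [mul_comm]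
    have h6 := intervalIntegral_tendsto_integral_Ioi 0 h5 tendsto_id
    rw [← h4]
    have h7 : mellin (fun t : ℝ => Real.log t • (Real.exp (-t) : ℂ)) 1 =
        ∫ x in Set.Ioi (0:ℝ), Complex.exp (-(x:ℂ)) * (Real.log x : ℂ) := by
      unfold mellin
      refine setIntegral_congr_fun measurableSet_Ioi fun x hx => ?_
      simp [mul_comm]
    rw [h7]
    exact h6
  · refine Continuous.locallyIntegrable (by fun_prop) |>.locallyIntegrableOn _
  · refine Asymptotics.IsBigO.trans (g := fun x : ℝ => Real.exp (-x)) ?_ ?_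
    · refine Asymptotics.isBigO_of_le _ fun x => ?_
      simp [Complex.norm_exp]
    · simpa using (isLittleO_exp_neg_mul_rpow_atTop one_pos (-2)).isBigO
  · have : Tendsto (fun x : ℝ => (Real.exp (-x) : ℂ)) (nhdsWithin 0 (Set.Ioi 0)) (nhds 1) := by
      have : Continuous (fun x : ℝ => (Real.exp (-x) : ℂ)) := by fun_prop
      have := this.tendsto 0
      simp at this
      simpa using this.mono_left nhdsWithin_le_nhds
    simpa using this.isBigO_one ℝ

lemma aux_cont (p : ℂ) : Continuous (dslope (fun x : ℝ => Complex.exp (-p * x) - Complex.exp (-(x:ℂ))) 0) := by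
  rw [← continuousOn_univ]
  refine (continuousOn_dslope (univ_mem)).2 ⟨by fun_prop, ?_⟩
  have h1 : DifferentiableAt ℝ (fun x : ℝ => (x:ℂ)) 0 := Complex.ofRealCLM.differentiableAt
  fun_prop

lemma aux_ds (p : ℂ) {x : ℝ} (hx : x ≠ 0) :
    dslope (fun x : ℝ => Complex.exp (-p * x) - Complex.exp (-(x:ℂ))) 0 x
     = (Complex.exp (-p * x) - Complex.exp (-(x:ℂ))) / x := by
  rw [dslope_of_ne _ hx, slope_def_module]
  simp [div_eq_inv_mul]

lemma aux_log (a b : ℝ) : IntervalIntegrable (fun x : ℝ => (Real.log x : ℂ)) volume a b := by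
  have h : IntervalIntegrable (fun x : ℝ => Real.log x) volume a b := intervalIntegral.intervalIntegrable_log'
  exact ⟨h.1.ofReal, h.2.ofReal⟩

lemma aux_int_s4 (p : ℂ) (h : ℝ → ℂ) (T : ℝ) (hT : 0 ≤ T) (hh : IntervalIntegrable h volume 0 T) :
    IntervalIntegrable (fun x : ℝ => (Complex.exp (-p * x) - Complex.exp (-(x:ℂ))) / x * h x) volume 0 T := by
  have := hh.continuousOn_mul (aux_cont p).continuousOn
  refine this.congr fun x hx => ?_
  rw [Set.uIoc_of_le hT] at hx
  simp only [aux_ds p hx.1.ne']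

lemma aux_parts (p : ℂ) (T : ℝ) (hT : 0 ≤ T) :
    p * ∫ x in (0:ℝ)..T, Complex.exp (-p * x) * (Real.log x : ℂ) =
    (∫ x in (0:ℝ)..T, Complex.exp (-(x:ℂ)) * (Real.log x : ℂ))
     - (Complex.exp (-p * T) - Complex.exp (-(T:ℂ))) * Real.log T
     + ∫ x in (0:ℝ)..T, (Complex.exp (-p * x) - Complex.exp (-(x:ℂ))) / x := by
  have i1 : IntervalIntegrable (fun x : ℝ => Complex.exp (-p * x) * (Real.log x : ℂ)) volume 0 T :=
    (aux_log 0 T).continuousOn_mul (by fun_prop)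
  have i2 : IntervalIntegrable (fun x : ℝ => Complex.exp (-(x:ℂ)) * (Real.log x : ℂ)) volume 0 T :=
    (aux_log 0 T).continuousOn_mul (by fun_prop)
  have i3 : IntervalIntegrable (fun x : ℝ => (Complex.exp (-p * x) - Complex.exp (-(x:ℂ))) / x) volume 0 T := by
    simpa using aux_int_s4 p (fun _ => 1) T hT (by simp)
  have key := intervalIntegral.integral_eq_sub_of_hasDerivAt_of_le hT
    (f := fun x : ℝ => -((Complex.exp (-p * x) - Complex.exp (-(x:ℂ))) * Real.log x))
    (f' := fun x : ℝ => p * (Complex.exp (-p * x) * (Real.log x : ℂ)) -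
      Complex.exp (-(x:ℂ)) * (Real.log x : ℂ) - (Complex.exp (-p * x) - Complex.exp (-(x:ℂ))) / x)
    ?_ ?_ (((i1.const_mul p).sub i2).sub i3)
  · rw [intervalIntegral.integral_sub ((i1.const_mul p).sub i2) i3,
      intervalIntegral.integral_sub (i1.const_mul p) i2, intervalIntegral.integral_const_mul] at key
    simp only [Real.log_zero, Complex.ofReal_zero, mul_zero, neg_zero, sub_zero] at key
    linear_combination key
  · have : Continuous (fun x : ℝ => -(dslope (fun x : ℝ => Complex.exp (-p * x) - Complex.exp (-(x:ℂ))) 0 x * ((x * Real.log x : ℝ) : ℂ))) :=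
      ((aux_cont p).mul (Complex.continuous_ofReal.comp Real.continuous_mul_log)).neg
    refine (this.congr fun x => ?_).continuousOn
    by_cases hx : x = 0
    · simp [hx]
    · have : (x:ℂ) ≠ 0 := by exact_mod_cast hx
      rw [aux_ds p hx]
      push_cast
      field_simp
  · intro x hx
    have hx0 : (x:ℂ) ≠ 0 := by exact_mod_cast hx.1.ne'
    have hid : HasDerivAt (fun x : ℝ => (x:ℂ)) 1 x := Complex.ofRealCLM.hasDerivAt
    have e1 := (hid.const_mul (-p)).cexp
    have e2 := hid.neg.cexp
    have e3 := (Real.hasDerivAt_log hx.1.ne').ofReal_comp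
    refine ((e1.sub e2).mul e3).neg.congr_deriv ?_
    simp only [Pi.neg_apply, Pi.sub_apply]
    push_cast
    field_simp
    ring

lemma aux_re (α : ℂ) (hα : |α.im| ≤ Real.pi / 2) (s : ℝ) (h0 : 0 ≤ s) (h1 : s ≤ 1) :
    Real.exp (-|α.re|) * (1 - s) ≤ (Complex.exp (s * α)).re := by
  rw [Complex.exp_re]
  simp only [Complex.re_ofReal_mul, Complex.im_ofReal_mul]
  have a1 : Real.exp (-|α.re|) ≤ Real.exp (s * α.re) := by
    apply Real.exp_le_exp.2
    have := neg_abs_le (α.re)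
    have := abs_nonneg (α.re)
    nlinarith
  have hpi := Real.pi_pos
  have a2 : 1 - s ≤ Real.cos (s * α.im) := by
    rw [← Real.cos_abs, abs_mul, abs_of_nonneg h0]
    have h2 : s * |α.im| ≤ s * (Real.pi / 2) := by gcongr
    refine le_trans ?_ (Real.one_sub_mul_le_cos (by positivity) (by nlinarith))
    have : 2 / Real.pi * (s * |α.im|) ≤ 2 / Real.pi * (s * (Real.pi / 2)) := by gcongr
    have h3 : 2 / Real.pi * (s * (Real.pi / 2)) = s := by field_simp
    linarith
  have : 0 ≤ 1 - s := by linarith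
  gcongr

lemma aux_slice (α : ℂ) {x : ℝ} (hx : x ≠ 0) :
    (Complex.exp (-Complex.exp α * x) - Complex.exp (-(x:ℂ))) / x =
    ∫ s in (0:ℝ)..1, -α * Complex.exp (s * α) * Complex.exp (-Complex.exp (s * α) * x) := by
  have hx0 : (x:ℂ) ≠ 0 := by exact_mod_cast hx
  rw [intervalIntegral.integral_eq_sub_of_hasDerivAt
    (f := fun s : ℝ => Complex.exp (-Complex.exp (s * α) * x) / x)]
  · simp [sub_div]
  · intro s _
    have hid : HasDerivAt (fun x : ℝ => (x:ℂ)) 1 s := Complex.ofRealCLM.hasDerivAt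
    refine ((((hid.mul_const α).cexp.neg).mul_const (x:ℂ)).cexp.div_const (x:ℂ)).congr_deriv ?_
    simp only [Pi.neg_apply]
    field_simp
  · apply Continuous.intervalIntegrable
    fun_prop

lemma aux_prod (α : ℂ) (hα : |α.im| ≤ Real.pi / 2) (h : ℝ → ℂ) (T : ℝ) (hT : 0 ≤ T)
    (hh : IntervalIntegrable h volume 0 T) :
    Integrable (fun z : ℝ × ℝ => Complex.exp (z.1 * α) * (Complex.exp (-Complex.exp (z.1 * α) * z.2) * h z.2))
      ((volume.restrict (Set.Ioc (0:ℝ) 1)).prod (volume.restrict (Set.Ioc 0 T))) := by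
  have h1 : Integrable (fun z : ℝ × ℝ => (1:ℂ) * h z.2)
    ((volume.restrict (Set.Ioc (0:ℝ) 1)).prod (volume.restrict (Set.Ioc 0 T))) :=
    Integrable.mul_prod (f := fun _ : ℝ => (1:ℂ)) (by simp)
      ((intervalIntegrable_iff_integrableOn_Ioc_of_le hT).1 hh)
  have h2 := h1.bdd_mul (f := fun z : ℝ × ℝ => (Complex.exp (z.1 * α) * Complex.exp (-Complex.exp (z.1 * α) * z.2)))
    (c := Real.exp |α.re|) (Continuous.aestronglyMeasurable (by fun_prop)) ?_
  · refine h2.congr (Eventually.of_forall fun z => ?_)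
    ring
  · rw [Measure.prod_restrict]
    refine (ae_restrict_iff' (measurableSet_Ioc.prod measurableSet_Ioc)).2 (Eventually.of_forall fun z hz => ?_)
    obtain ⟨⟨a1, a2⟩, ⟨b1, b2⟩⟩ := hz
    rw [norm_mul, Complex.norm_exp, Complex.norm_exp]
    have := aux_re α hα z.1 a1.le a2
    have h3 : 0 ≤ (Complex.exp (z.1 * α)).re := le_trans (mul_nonneg (Real.exp_nonneg _) (by linarith)) this
    have h4 : (-Complex.exp (z.1 * α) * (z.2:ℂ)).re ≤ 0 := by
      rw [mul_comm, Complex.re_ofReal_mul, Complex.neg_re]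
      nlinarith
    have h5 : ((z.1:ℂ) * α).re ≤ |α.re| := by
      rw [Complex.re_ofReal_mul]
      have := le_abs_self α.re
      have := abs_nonneg α.re
      nlinarith
    have h6 := Real.exp_le_exp.2 h5
    have h7 := Real.exp_le_one_iff.2 h4
    calc _ ≤ Real.exp |α.re| * 1 := by gcongr
      _ = _ := mul_one _

lemma aux_fub (α : ℂ) (hα : |α.im| ≤ Real.pi / 2) (h : ℝ → ℂ) (T : ℝ) (hT : 0 ≤ T)
    (hh : IntervalIntegrable h volume 0 T) :
    ∫ x in (0:ℝ)..T, (Complex.exp (-Complex.exp α * x) - Complex.exp (-(x:ℂ))) / x * h x =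
    -α * ∫ s in (0:ℝ)..1, Complex.exp (s * α) * ∫ x in (0:ℝ)..T, Complex.exp (-Complex.exp (s * α) * x) * h x := by
  simp only [← intervalIntegral.integral_const_mul]
  simp only [intervalIntegral.integral_of_le hT, intervalIntegral.integral_of_le zero_le_one]
  rw [integral_integral_swap]
  · refine setIntegral_congr_fun measurableSet_Ioc fun x hx => ?_
    rw [aux_slice α hx.1.ne', intervalIntegral.integral_of_le zero_le_one, ← integral_mul_const]
    refine setIntegral_congr_fun measurableSet_Ioc fun s hs => ?_
    ring
  · refine ((aux_prod α hα h T hT hh).const_mul (-α)).congr (Eventually.of_forall fun z => ?_)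
    simp only [Function.uncurry]

lemma aux_bd_s4 (α : ℂ) (hα : |α.im| ≤ Real.pi / 2) (T : ℝ) (hT : 0 ≤ T) (s : ℝ) (h0 : 0 ≤ s) (h1 : s ≤ 1) :
    ‖Complex.exp (-Complex.exp (s * α) * T)‖ ≤ Real.exp (-(Real.exp (-|α.re|) * T * (1 - s))) := by
  rw [Complex.norm_exp]
  apply Real.exp_le_exp.2
  rw [mul_comm, Complex.re_ofReal_mul, Complex.neg_re]
  have := aux_re α hα s h0 h1
  nlinarith

lemma aux_intbd (k : ℝ) (hk : 0 < k) : ∫ s in (0:ℝ)..1, Real.exp (-(k * (1 - s))) ≤ 1 / k := by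
  rw [intervalIntegral.integral_eq_sub_of_hasDerivAt (f := fun s : ℝ => Real.exp (-(k * (1 - s))) / k)]
  · have := Real.exp_pos (-k)
    simp only [sub_self, mul_zero, neg_zero, Real.exp_zero, sub_zero, mul_one]
    have : 0 ≤ Real.exp (-k) / k := by positivity
    linarith
  · intro s _
    refine (((((hasDerivAt_id s).const_sub 1).const_mul k).neg).exp.div_const k).congr_deriv ?_
    simp
    field_simp
  · apply Continuous.intervalIntegrable
    fun_prop

lemma aux_one (β : ℂ) (hβ : |β.im| ≤ Real.pi / 2) (T : ℝ) (hT : 0 ≤ T) :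
    ∫ x in (0:ℝ)..T, (Complex.exp (-Complex.exp β * x) - Complex.exp (-(x:ℂ))) / x =
    -β + β * ∫ s in (0:ℝ)..1, Complex.exp (-Complex.exp (s * β) * T) := by
  have h := aux_fub β hβ (fun _ => 1) T hT (by simp)
  simp only [mul_one] at h
  rw [h]
  have h2 : ∀ s : ℝ, Complex.exp (s * β) * ∫ x in (0:ℝ)..T, Complex.exp (-Complex.exp (s * β) * x)
      = 1 - Complex.exp (-Complex.exp (s * β) * T) := by
    intro s
    have hne : -Complex.exp (s * β) ≠ 0 := neg_ne_zero.2 (Complex.exp_ne_zero _)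
    have hne' := Complex.exp_ne_zero (s * β)
    rw [integral_exp_mul_complex hne]
    simp
    field_simp
    ring
  simp only [h2]
  rw [intervalIntegral.integral_sub (by simp) (Continuous.intervalIntegrable (by fun_prop) _ _)]
  simp
  ring

lemma aux_J (α : ℂ) (hα : |α.im| ≤ Real.pi / 2) (T : ℝ) (hT : 1 ≤ T) (s : ℝ) (h0 : 0 ≤ s) (h1 : s ≤ 1) :
    ‖Complex.exp (s * α) * (∫ x in (0:ℝ)..T, Complex.exp (-Complex.exp (s * α) * x) * (Real.log x : ℂ))
      - ((∫ x in (0:ℝ)..T, Complex.exp (-(x:ℂ)) * (Real.log x : ℂ)) - s * α)‖ ≤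
    2 * Real.log T * Real.exp (-(Real.exp (-|α.re|) * T * (1 - s))) + ‖α‖ * (1 / (Real.exp (-|α.re|) * T)) := by
  have hT0 : 0 < T := by linarith
  have hsα : |((s:ℂ) * α).im| ≤ Real.pi / 2 := by
    rw [Complex.im_ofReal_mul, abs_mul, abs_of_nonneg h0]
    have := abs_nonneg α.im
    nlinarith
  rw [aux_parts _ T hT0.le, aux_one _ hsα T hT0.le]
  set m := Real.exp (-|α.re|) with hm
  have hm0 : 0 < m := Real.exp_pos _
  have hm1 : m ≤ 1 := Real.exp_le_one_iff.2 (by simp)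
  have hI : ‖∫ σ in (0:ℝ)..1, Complex.exp (-Complex.exp (σ * (s * α)) * T)‖ ≤ 1 / (m * T) := by
    refine le_trans ?_ (aux_intbd (m * T) (by positivity))
    refine intervalIntegral.norm_integral_le_of_norm_le zero_le_one (Eventually.of_forall fun σ hσ => ?_)
      (Continuous.intervalIntegrable (by fun_prop) _ _)
    have := aux_bd_s4 α hα T hT0.le (σ * s) (mul_nonneg hσ.1.le h0) (by nlinarith [hσ.1, hσ.2])
    push_cast at this
    rw [mul_assoc] at this
    refine this.trans (Real.exp_le_exp.2 ?_)
    have h3 : σ * s ≤ σ := by nlinarith [hσ.1]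
    have : 0 < m * T := by positivity
    nlinarith
  have hb := aux_bd_s4 α hα T hT0.le s h0 h1
  have hb2 : ‖Complex.exp (-(T:ℂ))‖ ≤ Real.exp (-(m * T * (1 - s))) := by
    rw [Complex.norm_exp]
    apply Real.exp_le_exp.2
    simp only [Complex.neg_re, Complex.ofReal_re]
    have : m * (1 - s) ≤ 1 := by nlinarith
    nlinarith
  have hl : 0 ≤ Real.log T := Real.log_nonneg hT
  have e : ∀ N A B I : ℂ, N - (A - B) * Real.log T + (-(s * α) + s * α * I) - (N - s * α) =
      -(A - B) * Real.log T + s * α * I := by intros; ring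
  rw [e]
  refine (norm_add_le _ _).trans ?_
  gcongr
  · rw [norm_mul, norm_neg, Complex.norm_real, Real.norm_of_nonneg hl]
    have := (norm_sub_le _ _).trans (add_le_add hb hb2)
    calc _ ≤ _ := mul_le_mul_of_nonneg_right this hl
      _ = _ := by ring
  · rw [norm_mul, norm_mul, Complex.norm_real, Real.norm_of_nonneg h0]
    gcongr
    nlinarith [norm_nonneg α]

lemma aux_main (α : ℂ) (hα : |α.im| ≤ Real.pi / 2) :
    Tendsto (fun T : ℝ => ∫ x in (0:ℝ)..T,
      (Complex.exp (-Complex.exp α * x) - Complex.exp (-(x:ℂ))) / x * (Real.log x : ℂ)) atTop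
    (nhds (-α * (-(Real.eulerMascheroniConstant : ℂ) - α / 2))) := by
  set m := Real.exp (-|α.re|) with hm
  have hm0 : 0 < m := Real.exp_pos _
  set J : ℝ → ℝ → ℂ := fun T s => Complex.exp (s * α) *
    (∫ x in (0:ℝ)..T, Complex.exp (-Complex.exp (s * α) * x) * (Real.log x : ℂ)) with hJ
  set N : ℝ → ℂ := fun T => ∫ x in (0:ℝ)..T, Complex.exp (-(x:ℂ)) * (Real.log x : ℂ) with hN
  have hJi : ∀ T : ℝ, 0 ≤ T → IntervalIntegrable (J T) volume 0 1 := by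
    intro T hT
    rw [intervalIntegrable_iff_integrableOn_Ioc_of_le zero_le_one]
    refine (aux_prod α hα _ T hT (aux_log 0 T)).integral_prod_left.congr (Eventually.of_forall fun s => ?_)
    simp only [hJ]
    rw [intervalIntegral.integral_of_le hT, integral_const_mul]
  have key : ∀ T : ℝ, 1 ≤ T → ‖(∫ s in (0:ℝ)..1, J T s) - (N T - α / 2)‖ ≤
      2 * Real.log T * (1 / (m * T)) + ‖α‖ * (1 / (m * T)) := by
    intro T hT
    have hT0 : 0 < T := by linarith
    have hl : 0 ≤ Real.log T := Real.log_nonneg hT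
    have hc : IntervalIntegrable (fun s : ℝ => N T - s * α) volume 0 1 :=
      Continuous.intervalIntegrable (by fun_prop) _ _
    have e1 : N T - α / 2 = ∫ s in (0:ℝ)..1, (N T - s * α) := by
      rw [intervalIntegral.integral_sub (by simp) (Continuous.intervalIntegrable (by fun_prop) _ _),
        intervalIntegral.integral_mul_const, intervalIntegral.integral_ofReal]
      simp
      ring
    rw [e1, ← intervalIntegral.integral_sub (hJi T hT0.le) hc]
    refine (intervalIntegral.norm_integral_le_of_norm_le zero_le_one
      (Eventually.of_forall fun s hs => aux_J α hα T hT s hs.1.le hs.2)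
      (Continuous.intervalIntegrable (by fun_prop) _ _)).trans ?_
    rw [intervalIntegral.integral_add (Continuous.intervalIntegrable (by fun_prop) _ _) (by simp),
      intervalIntegral.integral_const_mul]
    have := aux_intbd (m * T) (by positivity)
    simp only [intervalIntegral.integral_const, sub_zero, one_smul]
    gcongr
  have lim0 : Tendsto (fun T : ℝ => 2 * Real.log T * (1 / (m * T)) + ‖α‖ * (1 / (m * T))) atTop (nhds 0) := by
    have a1 : Tendsto (fun T : ℝ => Real.log T / T) atTop (nhds 0) := by
      simpa using Real.isLittleO_log_id_atTop.tendsto_div_nhds_zero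
    have a2 : Tendsto (fun T : ℝ => T⁻¹) atTop (nhds 0) := tendsto_inv_atTop_zero
    have := (a1.const_mul (2 / m)).add (a2.const_mul (‖α‖ / m))
    simp only [mul_zero, add_zero] at this
    refine this.congr fun T => ?_
    simp only [div_eq_mul_inv, mul_inv]
    ring
  have lim1 : Tendsto (fun T => (∫ s in (0:ℝ)..1, J T s) - (N T - α / 2)) atTop (nhds 0) := by
    refine squeeze_zero_norm' ?_ lim0
    filter_upwards [eventually_ge_atTop 1] with T hT using key T hT
  have lim2 := lim1.add (aux_N.sub_const (α / 2))
  have lim3 := lim2.const_mul (-α)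
  rw [zero_add] at lim3
  refine lim3.congr' ?_
  filter_upwards [eventually_ge_atTop 0] with T hT
  rw [aux_fub α hα _ T hT (aux_log 0 T)]
  simp only [hJ, hN]
  ring

lemma aux_alpha (a : ℝ) (ha : a ≠ 0) :
    |((Real.log |a| : ℂ) - (Real.pi / 2 * Real.sign a : ℝ) * Complex.I).im| ≤ Real.pi / 2 ∧
    Complex.exp ((Real.log |a| : ℂ) - (Real.pi / 2 * Real.sign a : ℝ) * Complex.I) = -(Complex.I * a) := by
  have hp := Real.pi_pos
  have h1 : Complex.exp (Real.log |a| : ℂ) = (|a| : ℝ) := by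
    rw [← Complex.ofReal_exp, Real.exp_log (abs_pos.2 ha)]
  have h2 : Complex.exp (Real.pi / 2 * Complex.I) = Complex.I := Complex.exp_pi_div_two_mul_I
  constructor
  · rcases lt_or_gt_of_ne ha with h | h
    · simp [Real.sign_of_neg h, abs_of_pos (half_pos hp)]
    · simp [Real.sign_of_pos h, abs_of_pos (half_pos hp)]
  · rw [Complex.exp_sub, h1]
    rcases lt_or_gt_of_ne ha with h | h
    · rw [Real.sign_of_neg h, abs_of_neg h]
      push_cast
      rw [mul_neg_one, neg_mul, Complex.exp_neg, h2]
      simp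
      ring
    · rw [Real.sign_of_pos h, abs_of_pos h]
      push_cast
      rw [mul_one, h2]
      simp
      ring



/-- For `t ≠ 0`, `u ∉ {0, t}` and `C` the Euler–Mascheroni constant, the improper integral
`lim_{T→∞} ∫_0^T e^{-iux} ((e^{itx} - 1)/(ix)) log x dx` exists and equals
`-i log(|t-u|/|u|) (C + (1/2) log(|t-u| |u|))
  - (π/2)((C + log|t-u|) sign(t-u) - (C + log|u|) sign(-u))`. -/
theorem stmt4 (t u : ℝ) (ht : t ≠ 0) (hu : u ≠ 0) (hut : u ≠ t) :
    Tendsto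
      (fun T : ℝ => ∫ x in (0:ℝ)..T,
        Complex.exp (-(Complex.I) * u * x) *
          ((Complex.exp (Complex.I * t * x) - 1) / (Complex.I * x)) * (Real.log x : ℂ))
      atTop
      (nhds (-(Complex.I) * (Real.log (|t - u| / |u|) : ℂ) *
          ((Real.eulerMascheroniConstant + (1/2) * Real.log (|t - u| * |u|) : ℝ) : ℂ) -
        ((Real.pi / 2 : ℝ) : ℂ) *
          (((Real.eulerMascheroniConstant + Real.log |t - u|) * Real.sign (t - u) -
            (Real.eulerMascheroniConstant + Real.log |u|) * Real.sign (-u) : ℝ) : ℂ))) := by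
  have ha : t - u ≠ 0 := sub_ne_zero.2 (Ne.symm hut)
  have hb : -u ≠ 0 := neg_ne_zero.2 hu
  obtain ⟨a1, a2⟩ := aux_alpha (t - u) ha
  obtain ⟨b1, b2⟩ := aux_alpha (-u) hb
  have hA := aux_main _ a1
  have hB := aux_main _ b1
  rw [a2] at hA
  rw [b2] at hB
  have h := (hA.sub hB).const_mul (-Complex.I)
  have hlim : ∀ L L' : ℂ, L = L' → Tendsto (fun T : ℝ => -Complex.I * ((∫ x in (0:ℝ)..T,
      (Complex.exp (-(-(Complex.I * ((t - u : ℝ) : ℂ))) * x) - Complex.exp (-(x:ℂ))) / x * (Real.log x : ℂ)) -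
      ∫ x in (0:ℝ)..T,
      (Complex.exp (-(-(Complex.I * ((-u : ℝ) : ℂ))) * x) - Complex.exp (-(x:ℂ))) / x * (Real.log x : ℂ)))
      atTop (nhds L) → Tendsto (fun T : ℝ => ∫ x in (0:ℝ)..T,
        Complex.exp (-(Complex.I) * u * x) *
          ((Complex.exp (Complex.I * t * x) - 1) / (Complex.I * x)) * (Real.log x : ℂ)) atTop (nhds L') := by
    rintro L _ rfl hL
    refine hL.congr' ?_
    filter_upwards [eventually_ge_atTop 0] with T hT
    rw [← intervalIntegral.integral_sub (aux_int_s4 _ _ T hT (aux_log 0 T)) (aux_int_s4 _ _ T hT (aux_log 0 T)),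
      ← intervalIntegral.integral_const_mul]
    refine intervalIntegral.integral_congr_ae (Eventually.of_forall fun x hx => ?_)
    rw [Set.uIoc_of_le hT] at hx
    have hx0 : (x:ℂ) ≠ 0 := by exact_mod_cast hx.1.ne'
    have e1 : Complex.exp (-(-(Complex.I * ((t - u : ℝ) : ℂ))) * x) =
        Complex.exp (-(Complex.I) * u * x) * Complex.exp (Complex.I * t * x) := by
      rw [← Complex.exp_add]
      congr 1
      push_cast
      ring
    have e2 : Complex.exp (-(-(Complex.I * ((-u : ℝ) : ℂ))) * x) = Complex.exp (-(Complex.I) * u * x) := by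
      congr 1
      push_cast
      ring
    rw [e1, e2]
    have hI : (Complex.I * x)⁻¹ = -Complex.I * (x:ℂ)⁻¹ := by
      rw [mul_inv, Complex.inv_I]
    simp only [div_eq_mul_inv, hI]
    ring
  refine hlim _ _ ?_ h
  rw [Real.log_div (abs_ne_zero.2 ha) (abs_ne_zero.2 hu), Real.log_mul (abs_ne_zero.2 ha) (abs_ne_zero.2 hu),
    abs_neg]
  have s1 : ((Real.sign (t - u) : ℝ) : ℂ) ^ 2 = 1 := by
    rcases lt_or_gt_of_ne ha with h | h
    · simp [Real.sign_of_neg h]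
    · simp [Real.sign_of_pos h]
  have s2 : ((Real.sign (-u) : ℝ) : ℂ) ^ 2 = 1 := by
    rcases lt_or_gt_of_ne hb with h | h
    · simp [Real.sign_of_neg h]
    · simp [Real.sign_of_pos h]
  have hI := Complex.I_sq
  generalize Real.sign (t - u) = σ at *
  generalize Real.sign (-u) = τ at *
  push_cast
  have hI3 : Complex.I ^ 3 = -Complex.I := by rw [pow_succ, hI]; ring
  ring_nf
  simp only [hI, hI3, s1, s2]
  ring
end

section
/- Let t ∈ ℝ \ {0}, u ∈ ℝ \ {0, t}, and a ∈ ℂ. Then the improper symmetric integral lim_{T→∞} ∫_{−T}^{T} e^{−iux} ((e^{itx} − 1)/(ix)) · (1_{(0,∞)}(x)·a + 1_{(−∞,0)}(x)·\bar{a}) dx exists and equals π·(sign(t−u) − sign(−u))·Re(a) − 2·log(|t−u|/|u|)·Im(a); in particular the limit is real when multiplied out as stated. -/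
open MeasureTheory Filter

section aux
open Complex

lemma aux_norm_s5 (p q x : ℝ) : ‖cexp (I * p * x) - cexp (I * q * x)‖ ≤ |p - q| * |x| := by
  have h1 : cexp (I * p * x) - cexp (I * q * x)
      = cexp (((q * x : ℝ) : ℂ) * I) * (cexp (I * (((p - q) * x : ℝ) : ℂ)) - 1) := by
    rw [mul_sub, ← Complex.exp_add, mul_one]
    push_cast
    congr 2 <;> ring
  rw [h1, norm_mul, Complex.norm_exp_ofReal_mul_I, one_mul, ← abs_mul]
  exact (Real.norm_exp_I_mul_ofReal_sub_one_le).trans (by simp)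

lemma aux_ne (p s : ℝ) (hp : p ≠ 0) : (s : ℂ) - I * p ≠ 0 := by
  intro h
  have := congrArg Complex.im h
  simp at this
  exact hp this

lemma aux_normSq (p s : ℝ) : ‖(s : ℂ) - I * p‖ ^ 2 = s ^ 2 + p ^ 2 := by
  rw [← Complex.normSq_eq_norm_sq, Complex.normSq_apply]
  simp; ring

lemma aux_norm_ge (p s : ℝ) : |p| ≤ ‖(s : ℂ) - I * p‖ := by
  have := Complex.abs_im_le_norm ((s : ℂ) - I * p)
  simpa using this

lemma aux_int_sq (p : ℝ) (hp : p ≠ 0) : Integrable (fun s : ℝ => (s ^ 2 + p ^ 2)⁻¹) := by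
  have := ((integrable_inv_one_add_sq).comp_div hp).const_mul ((p^2)⁻¹)
  refine this.congr (Eventually.of_forall fun s => ?_)
  simp only
  rw [← mul_inv]
  congr 1
  field_simp
  ring

lemma aux_int_s5 (p q : ℝ) (hp : p ≠ 0) (hq : q ≠ 0) :
    Integrable (fun s : ℝ => ((s : ℂ) - I * p)⁻¹ - ((s : ℂ) - I * q)⁻¹) := by
  have hc : ∀ p : ℝ, p ≠ 0 → Continuous (fun s : ℝ => ((s : ℂ) - I * p)⁻¹) := fun p hp =>
    Continuous.inv₀ (by fun_prop) (fun s => aux_ne p s hp)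
  refine Integrable.mono' (((aux_int_sq p hp).add (aux_int_sq q hq)).const_mul |p - q|)
    ((hc p hp).sub (hc q hq)).aestronglyMeasurable (Eventually.of_forall fun s => ?_)
  have h1 := aux_ne p s hp
  have h2 := aux_ne q s hq
  have : ((s : ℂ) - I * p)⁻¹ - ((s : ℂ) - I * q)⁻¹
      = I * ((p - q : ℝ) : ℂ) * (((s : ℂ) - I * p)⁻¹ * ((s : ℂ) - I * q)⁻¹) := by
    field_simp
    push_cast
    ring
  rw [this, norm_mul, norm_mul, norm_mul, norm_I, one_mul, Complex.norm_real, Real.norm_eq_abs]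
  refine mul_le_mul_of_nonneg_left ?_ (abs_nonneg _)
  show _ ≤ (s ^ 2 + p ^ 2)⁻¹ + (s ^ 2 + q ^ 2)⁻¹
  rw [← aux_normSq p, ← aux_normSq q, norm_inv, norm_inv, ← inv_pow, ← inv_pow]
  nlinarith [sq_nonneg (‖(s : ℂ) - I * p‖⁻¹ - ‖(s : ℂ) - I * q‖⁻¹), sq_nonneg (‖(s : ℂ) - I * p‖⁻¹), sq_nonneg (‖(s : ℂ) - I * q‖⁻¹)]

lemma aux_slit (p s : ℝ) (hp : p ≠ 0) : (s : ℂ) - I * p ∈ slitPlane := by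
  right; simpa using hp

lemma aux_log_s5 (p q : ℝ) (hp : p ≠ 0) (hq : q ≠ 0) :
    ∫ s in Set.Ioi (0:ℝ), (((s : ℂ) - I * p)⁻¹ - ((s : ℂ) - I * q)⁻¹)
      = log (-(I * q)) - log (-(I * p)) := by
  have hd : ∀ p : ℝ, p ≠ 0 → ∀ s : ℝ, HasDerivAt (fun s : ℝ => log ((s : ℂ) - I * p)) ((s : ℂ) - I * p)⁻¹ s := by
    intro p hp s
    have := ((Complex.ofRealCLM.hasDerivAt (x := s)).sub_const (I * (p:ℂ))).clog_real (aux_slit p s hp)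
    simpa using this
  have hlim : Tendsto (fun s : ℝ => log ((s : ℂ) - I * p) - log ((s : ℂ) - I * q)) atTop (nhds 0) := by
    have hl : ∀ p : ℝ, Tendsto (fun s : ℝ => log (1 - I * p * ((s⁻¹ : ℝ) : ℂ))) atTop (nhds 0) := by
      intro p
      have h0 : Tendsto (fun s : ℝ => 1 - I * p * ((s⁻¹ : ℝ) : ℂ)) atTop (nhds (1 - I * p * ((0 : ℝ) : ℂ))) :=
        tendsto_const_nhds.sub (tendsto_const_nhds.mul
          ((Complex.continuous_ofReal.tendsto 0).comp tendsto_inv_atTop_zero))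
      have := h0.clog (by simp)
      simpa using this
    have := (hl p).sub (hl q)
    rw [sub_zero] at this
    refine this.congr' ?_
    filter_upwards [eventually_gt_atTop 0] with s hs
    have hs' : (s:ℂ) ≠ 0 := by exact_mod_cast hs.ne'
    have e : ∀ p : ℝ, p ≠ 0 → log ((s : ℂ) - I * p) = Real.log s + log (1 - I * p * ((s⁻¹ : ℝ) : ℂ)) := by
      intro p hp
      rw [← Complex.log_ofReal_mul hs]
      · congr 1
        push_cast
        field_simp
      · intro h
        have := congrArg Complex.re h
        simp at this
    rw [e p hp, e q hq]; ring
  have := integral_Ioi_of_hasDerivAt_of_tendsto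
    (f := fun s : ℝ => log ((s : ℂ) - I * p) - log ((s : ℂ) - I * q)) (a := 0) (m := 0)
    ((hd p hp 0).sub (hd q hq 0)).continuousAt.continuousWithinAt
    (fun s _ => (hd p hp s).sub (hd q hq s)) (aux_int_s5 p q hp hq).integrableOn hlim
  rw [this]
  simp

lemma aux_bdd (p q x : ℝ) : ‖(cexp (I * p * x) - cexp (I * q * x)) / x‖ ≤ |p - q| := by
  rw [norm_div, Complex.norm_real, Real.norm_eq_abs]
  exact div_le_of_le_mul₀ (abs_nonneg _) (abs_nonneg _) (aux_norm_s5 p q x)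

lemma aux_fubini (p q : ℝ) (hp : p ≠ 0) (hq : q ≠ 0) (T : ℝ) (hT : 0 < T) :
    ∫ x in (0:ℝ)..T, (cexp (I * p * x) - cexp (I * q * x)) / x
      = ∫ s in Set.Ioi (0:ℝ), ((((s : ℂ) - I * p)⁻¹ - ((s : ℂ) - I * q)⁻¹)
        - (cexp ((I * p - s) * T) * ((s : ℂ) - I * p)⁻¹
          - cexp ((I * q - s) * T) * ((s : ℂ) - I * q)⁻¹)) := by
  have hinner : ∀ x : ℝ, 0 < x → ∫ s in Set.Ioi (0:ℝ), (cexp (I * p * x) - cexp (I * q * x)) * cexp (-(x:ℂ) * s)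
      = (cexp (I * p * x) - cexp (I * q * x)) / x := by
    intro x hx
    rw [integral_const_mul, integral_exp_mul_complex_Ioi (by simpa using hx)]
    have : (x:ℂ) ≠ 0 := by exact_mod_cast hx.ne'
    simp
    field_simp
  have hprod : Integrable (Function.uncurry fun (x s : ℝ) => (cexp (I * p * x) - cexp (I * q * x)) * cexp (-(x:ℂ) * s))
      ((volume.restrict (Set.Ioc 0 T)).prod (volume.restrict (Set.Ioi (0:ℝ)))) := by
    have hm : AEStronglyMeasurable (Function.uncurry fun (x s : ℝ) => (cexp (I * p * x) - cexp (I * q * x)) * cexp (-(x:ℂ) * s))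
      ((volume.restrict (Set.Ioc 0 T)).prod (volume.restrict (Set.Ioi (0:ℝ)))) := by
      apply Continuous.aestronglyMeasurable
      unfold Function.uncurry
      fun_prop
    rw [integrable_prod_iff hm]
    refine ⟨?_, ?_⟩
    · filter_upwards [ae_restrict_mem measurableSet_Ioc] with x hx
      simp only [Function.uncurry_apply_pair]
      exact (integrableOn_exp_mul_complex_Ioi (a := -(x:ℂ)) (by simpa using hx.1) 0).const_mul _
    · refine Integrable.mono' (g := fun _ => |p - q|) (integrable_const _) hm.norm.integral_prod_right' ?_
      filter_upwards [ae_restrict_mem measurableSet_Ioc] with x hx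
      have hx0 := hx.1
      have : ∫ s in Set.Ioi (0:ℝ), ‖Function.uncurry (fun (x s : ℝ) => (cexp (I * p * x) - cexp (I * q * x)) * cexp (-(x:ℂ) * s)) (x, s)‖ = ‖cexp (I * p * x) - cexp (I * q * x)‖ / x := by
        have e : ∀ s : ℝ, ‖Function.uncurry (fun (x s : ℝ) => (cexp (I * p * x) - cexp (I * q * x)) * cexp (-(x:ℂ) * s)) (x, s)‖ = ‖cexp (I * p * x) - cexp (I * q * x)‖ * Real.exp (-x * s) := by
          intro s
          rw [Function.uncurry_apply_pair, norm_mul, Complex.norm_exp (-(x:ℂ) * s)]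
          simp
        simp_rw [e]
        rw [integral_const_mul, integral_exp_mul_Ioi (by simpa using hx0)]
        simp
        field_simp
      rw [this, Real.norm_of_nonneg (by positivity), div_le_iff₀ hx0]
      simpa [abs_of_pos hx0] using aux_norm_s5 p q x
  rw [intervalIntegral.integral_of_le hT.le]
  rw [← setIntegral_congr_fun measurableSet_Ioc (fun x hx => hinner x hx.1)]
  rw [integral_integral_swap hprod]
  refine setIntegral_congr_fun measurableSet_Ioi (fun s _ => ?_)
  rw [← intervalIntegral.integral_of_le hT.le]
  have e : ∀ x : ℝ, (cexp (I * p * x) - cexp (I * q * x)) * cexp (-(x:ℂ) * s)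
      = cexp ((I * p - s) * x) - cexp ((I * q - s) * x) := by
    intro x
    rw [sub_mul, ← Complex.exp_add, ← Complex.exp_add]
    congr 2 <;> ring
  simp_rw [e]
  have h1 := aux_ne p s hp
  have h2 := aux_ne q s hq
  have h1' : I * p - (s:ℂ) ≠ 0 := by rw [← neg_sub]; exact neg_ne_zero.mpr h1
  have h2' : I * q - (s:ℂ) ≠ 0 := by rw [← neg_sub]; exact neg_ne_zero.mpr h2
  rw [intervalIntegral.integral_sub, integral_exp_mul_complex h1', integral_exp_mul_complex h2']
  · rw [← neg_sub (s:ℂ) (I * p), ← neg_sub (s:ℂ) (I * q)]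
    simp only [ofReal_zero, mul_zero, Complex.exp_zero, div_eq_mul_inv, inv_neg]
    ring
  · exact Continuous.intervalIntegrable (by fun_prop) _ _
  · exact Continuous.intervalIntegrable (by fun_prop) _ _

lemma aux_key (p q : ℝ) (hp : p ≠ 0) (hq : q ≠ 0) :
    Tendsto (fun T : ℝ => ∫ x in (0:ℝ)..T, (cexp (I * p * x) - cexp (I * q * x)) / x) atTop
      (nhds (log (-(I * q)) - log (-(I * p)))) := by
  rw [← aux_log_s5 p q hp hq]
  have hc : ∀ p : ℝ, p ≠ 0 → Continuous (fun s : ℝ => ((s : ℂ) - I * p)⁻¹) := fun p hp =>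
    Continuous.inv₀ (by fun_prop) (fun s => aux_ne p s hp)
  have hn : ∀ p : ℝ, p ≠ 0 → ∀ s T : ℝ, ‖cexp ((I * p - s) * T) * ((s : ℂ) - I * p)⁻¹‖ ≤ Real.exp (-s * T) * |p|⁻¹ := by
    intro p hp s T
    rw [norm_mul, Complex.norm_exp, norm_inv]
    have : ((I * p - s) * T : ℂ).re = -s * T := by simp
    rw [this]
    have := abs_pos.mpr hp
    gcongr
    exact aux_norm_ge p s
  have hl : ∀ p : ℝ, p ≠ 0 → ∀ s : ℝ, 0 < s → Tendsto (fun T : ℝ => cexp ((I * p - s) * T) * ((s : ℂ) - I * p)⁻¹) atTop (nhds 0) := by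
    intro p hp s hs
    refine squeeze_zero_norm (fun T => hn p hp s T) ?_
    have : Tendsto (fun T : ℝ => Real.exp (-s * T)) atTop (nhds 0) :=
      Real.tendsto_exp_atBot.comp (tendsto_id.const_mul_atTop_of_neg (by linarith))
    simpa using this.mul_const |p|⁻¹
  refine Tendsto.congr' (f₁ := fun T : ℝ => ∫ s in Set.Ioi (0:ℝ), ((((s : ℂ) - I * p)⁻¹ - ((s : ℂ) - I * q)⁻¹)
        - (cexp ((I * p - s) * T) * ((s : ℂ) - I * p)⁻¹
          - cexp ((I * q - s) * T) * ((s : ℂ) - I * q)⁻¹))) ?_ ?_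
  · filter_upwards [eventually_gt_atTop 0] with T hT
    exact (aux_fubini p q hp hq T hT).symm
  · refine tendsto_integral_filter_of_dominated_convergence
      (fun s => ‖((s : ℂ) - I * p)⁻¹ - ((s : ℂ) - I * q)⁻¹‖ + (Real.exp (-s) * |p|⁻¹ + Real.exp (-s) * |q|⁻¹)) ?_ ?_ ?_ ?_
    · refine Eventually.of_forall fun T => Continuous.aestronglyMeasurable ?_
      have := hc p hp
      have := hc q hq
      fun_prop
    · filter_upwards [eventually_ge_atTop 1] with T hT
      filter_upwards [ae_restrict_mem measurableSet_Ioi] with s hs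
      have hs0 : 0 < s := hs
      refine (norm_sub_le _ _).trans (add_le_add le_rfl ((norm_sub_le _ _).trans ?_))
      have he : Real.exp (-s * T) ≤ Real.exp (-s) := Real.exp_le_exp.mpr (by nlinarith)
      refine add_le_add ((hn p hp s T).trans ?_) ((hn q hq s T).trans ?_) <;> gcongr
    · exact (aux_int_s5 p q hp hq).integrableOn.norm.add
        (((integrableOn_exp_neg_Ioi 0).mul_const _).add ((integrableOn_exp_neg_Ioi 0).mul_const _))
    · filter_upwards [ae_restrict_mem measurableSet_Ioi] with s hs
      have := (tendsto_const_nhds (x := ((s : ℂ) - I * p)⁻¹ - ((s : ℂ) - I * q)⁻¹)).sub ((hl p hp s hs).sub (hl q hq s hs))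
      simpa using this

lemma aux_clog (p : ℝ) (hp : p ≠ 0) :
    log (-(I * p)) = (Real.log |p| : ℝ) - (Real.pi / 2 * Real.sign p : ℝ) * I := by
  apply Complex.ext
  · simp [Complex.log_re]
  · rw [Complex.log_im]
    rcases lt_or_gt_of_ne hp with h | h
    · have : -(I * p) = ((-p : ℝ) : ℂ) * I := by push_cast; ring
      rw [this, Complex.arg_real_mul _ (by linarith), Real.sign_of_neg h]
      simp
    · have : -(I * p) = (p : ℂ) * (-I) := by ring
      rw [this, Complex.arg_real_mul _ h, Real.sign_of_pos h]
      simp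

lemma aux_split (t u : ℝ) (a : ℂ) (T : ℝ) (hT : 0 < T) :
    ∫ x in (-T)..T,
        Complex.exp (-(Complex.I) * u * x) *
          ((Complex.exp (Complex.I * t * x) - 1) / (Complex.I * x)) *
          (Set.indicator (Set.Ioi (0:ℝ)) (fun _ => a) x +
            Set.indicator (Set.Iio (0:ℝ)) (fun _ => (starRingEnd ℂ) a) x)
    = ((2 * (-I * (∫ x in (0:ℝ)..T, (cexp (I * (t - u : ℝ) * x) - cexp (I * (-u : ℝ) * x)) / x) * a).re : ℝ) : ℂ) := by
  set G : ℝ → ℂ := fun x => (cexp (I * (t - u : ℝ) * x) - cexp (I * (-u : ℝ) * x)) / x with hG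
  have hF : ∀ x : ℝ, Complex.exp (-(Complex.I) * u * x) *
          ((Complex.exp (Complex.I * t * x) - 1) / (Complex.I * x)) = -I * G x := by
    intro x
    have e1 : cexp (I * (t - u : ℝ) * x) = Complex.exp (-(Complex.I) * u * x) * Complex.exp (Complex.I * t * x) := by
      rw [← Complex.exp_add]; congr 1; push_cast; ring
    have e2 : cexp (I * (-u : ℝ) * x) = Complex.exp (-(Complex.I) * u * x) := by
      congr 1; push_cast; ring
    simp only [hG]
    rw [e1, e2, div_eq_mul_inv, mul_inv, Complex.inv_I]
    ring
  have hGc : ∀ x : ℝ, -I * G (-x) = (starRingEnd ℂ) (-I * G x) := by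
    intro x
    simp only [hG, map_mul, map_div₀, map_sub, ← Complex.exp_conj, Complex.conj_I, Complex.conj_ofReal, map_neg,
      Complex.ofReal_neg]
    have e : ∀ y : ℂ, -I * y * (x:ℂ) = I * y * -(x:ℂ) := fun y => by ring
    simp only [e, div_neg]
    ring
  simp_rw [hF]
  set W : ℝ → ℂ := fun x => Set.indicator (Set.Ioi (0:ℝ)) (fun _ => a) x +
            Set.indicator (Set.Iio (0:ℝ)) (fun _ => (starRingEnd ℂ) a) x with hW
  have hWm : Measurable W := (measurable_const.indicator measurableSet_Ioi).add (measurable_const.indicator measurableSet_Iio)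
  have hWb : ∀ x, ‖W x‖ ≤ ‖a‖ := by
    intro x
    rcases lt_trichotomy x 0 with h | h | h
    · simp [hW, h, h.le]
    · simp [hW, h]
    · simp [hW, h, h.le]
  have hGm : Measurable G := by
    simp only [hG]
    fun_prop
  have hI : ∀ b c : ℝ, IntervalIntegrable (fun x => -I * G x * W x) volume b c := by
    intro b c
    refine (intervalIntegrable_const (c := |(t - u) - (-u)| * ‖a‖)).mono_fun ((hGm.const_mul _).mul hWm).aestronglyMeasurable
      (Eventually.of_forall fun x => ?_)
    simp only [norm_mul, norm_neg, norm_I, one_mul]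
    rw [Real.norm_of_nonneg (abs_nonneg _), Real.norm_of_nonneg (norm_nonneg _)]
    exact mul_le_mul (aux_bdd _ _ _) (hWb x) (norm_nonneg _) (abs_nonneg _)
  rw [← intervalIntegral.integral_add_adjacent_intervals (hI (-T) 0) (hI 0 T)]
  have h1 : ∫ x in (0:ℝ)..T, -I * G x * W x = -I * (∫ x in (0:ℝ)..T, G x) * a := by
    rw [← intervalIntegral.integral_const_mul, ← intervalIntegral.integral_mul_const]
    rw [intervalIntegral.integral_of_le hT.le, intervalIntegral.integral_of_le hT.le]
    refine setIntegral_congr_fun measurableSet_Ioc fun x hx => ?_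
    have := hx.1
    simp [hW, this, this.le]
  have h2 : ∫ x in (-T)..0, -I * G x * W x = (starRingEnd ℂ) (-I * (∫ x in (0:ℝ)..T, G x) * a) := by
    have := intervalIntegral.integral_comp_neg (a := 0) (b := T) (fun x => -I * G x * W x)
    rw [neg_zero] at this
    rw [← this, ← h1]
    rw [intervalIntegral.integral_of_le hT.le, intervalIntegral.integral_of_le hT.le, ← integral_conj]
    refine setIntegral_congr_fun measurableSet_Ioc fun x hx => ?_
    have := hx.1
    simp only [hGc]
    simp [hW, this, this.le]
  rw [h1, h2, add_comm, Complex.add_conj]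

end aux

/-- For `t ≠ 0`, `u ∉ {0, t}` and `a ∈ ℂ`, the improper symmetric integral
`lim_{T→∞} ∫_{-T}^{T} e^{-iux} ((e^{itx} - 1)/(ix)) (1_{(0,∞)}(x) a + 1_{(-∞,0)}(x) conj a) dx`
exists and equals the real number
`π (sign(t-u) - sign(-u)) Re(a) - 2 log(|t-u|/|u|) Im(a)`. -/
theorem stmt5 (t u : ℝ) (ht : t ≠ 0) (hu : u ≠ 0) (hut : u ≠ t) (a : ℂ) :
    Tendsto
      (fun T : ℝ => ∫ x in (-T)..T,
        Complex.exp (-(Complex.I) * u * x) *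
          ((Complex.exp (Complex.I * t * x) - 1) / (Complex.I * x)) *
          (Set.indicator (Set.Ioi (0:ℝ)) (fun _ => a) x +
            Set.indicator (Set.Iio (0:ℝ)) (fun _ => (starRingEnd ℂ) a) x))
      atTop
      (nhds ((Real.pi * (Real.sign (t - u) - Real.sign (-u)) * a.re -
        2 * Real.log (|t - u| / |u|) * a.im : ℝ) : ℂ)) := by
  
  have h := aux_key (t - u) (-u) (sub_ne_zero.mpr hut.symm) (neg_ne_zero.mpr hu)
  rw [aux_clog _ (sub_ne_zero.mpr hut.symm), aux_clog _ (neg_ne_zero.mpr hu)] at h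
  have h2 := (Complex.continuous_ofReal.tendsto _).comp
    (((Complex.continuous_re.tendsto _).comp ((h.const_mul (-Complex.I)).mul_const a)).const_mul 2)
  have h3 := h2.congr' (f₂ := fun T : ℝ => ∫ x in (-T)..T,
        Complex.exp (-(Complex.I) * u * x) *
          ((Complex.exp (Complex.I * t * x) - 1) / (Complex.I * x)) *
          (Set.indicator (Set.Ioi (0:ℝ)) (fun _ => a) x +
            Set.indicator (Set.Iio (0:ℝ)) (fun _ => (starRingEnd ℂ) a) x)) (by
      filter_upwards [eventually_gt_atTop 0] with T hT
      exact (aux_split t u a T hT).symm)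
  convert h3 using 3
  rw [Real.log_div (abs_ne_zero.mpr (sub_ne_zero.mpr hut.symm)) (abs_ne_zero.mpr hu)]
  simp only [abs_neg]
  simp only [Complex.mul_re, Complex.mul_im, Complex.sub_re, Complex.sub_im, Complex.neg_re, Complex.neg_im,
    Complex.I_re, Complex.I_im, Complex.ofReal_re, Complex.ofReal_im]
  ring
end

section
/- For every h ∈ (0,1) and every t ∈ ℝ, the function x ↦ |e^{itx} − 1|² · |x|^{−1−2h} is Lebesgue integrable on ℝ \ {0} and ∫_ℝ |e^{itx} − 1|² · |x|^{−1−2h} dx = |t|^{2h} · π / (h · Γ(2h) · sin(hπ)). -/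
open MeasureTheory

open Set in
lemma ton (F : ℝ → ℝ → ℝ) (f g : ℝ → ℝ) (hm : Measurable (Function.uncurry F))
    (h0 : ∀ x > 0, ∀ y > 0, 0 ≤ F x y)
    (hf : ∀ x > 0, ∫ y in Ioi (0:ℝ), F x y = f x)
    (hgi : ∀ y > 0, IntegrableOn (fun x => F x y) (Ioi (0:ℝ)))
    (hg : ∀ y > 0, ∫ x in Ioi (0:ℝ), F x y = g y)
    (hgI : IntegrableOn g (Ioi (0:ℝ))) :
    IntegrableOn f (Ioi (0:ℝ)) ∧ ∫ x in Ioi (0:ℝ), f x = ∫ y in Ioi (0:ℝ), g y := by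
  have hI : Integrable (Function.uncurry F)
      ((volume.restrict (Ioi (0:ℝ))).prod (volume.restrict (Ioi (0:ℝ)))) := by
    rw [integrable_prod_iff' hm.aestronglyMeasurable]
    constructor
    · filter_upwards [ae_restrict_mem measurableSet_Ioi] with y hy
      exact hgi y hy
    · refine hgI.congr_fun (fun y hy => ?_) measurableSet_Ioi
      rw [← hg y hy]
      refine setIntegral_congr_fun measurableSet_Ioi (fun x hx => ?_)
      simp only [Function.uncurry]
      rw [Real.norm_of_nonneg (h0 x hx y hy)]
  have e1 : ∫ x in Ioi (0:ℝ), f x = ∫ x in Ioi (0:ℝ), ∫ y in Ioi (0:ℝ), F x y :=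
    setIntegral_congr_fun measurableSet_Ioi (fun x hx => (hf x hx).symm)
  have e2 : ∫ x in Ioi (0:ℝ), g x = ∫ y in Ioi (0:ℝ), ∫ x in Ioi (0:ℝ), F x y :=
    setIntegral_congr_fun measurableSet_Ioi (fun x hx => (hg x hx).symm)
  refine ⟨IntegrableOn.congr_fun (f := fun x => ∫ y in Ioi (0:ℝ), F x y)
    hI.integral_prod_left (fun x hx => hf x hx) measurableSet_Ioi, ?_⟩
  rw [e1, e2, integral_integral_swap hI]

open Set Real in
lemma gamma_int {a r : ℝ} (ha : 0 < a) (hr : 0 < r) :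
    IntegrableOn (fun t : ℝ => t ^ (a - 1) * exp (-(r * t))) (Ioi 0) := by
  refine .of_integral_ne_zero ?_
  rw [integral_rpow_mul_exp_neg_mul_Ioi ha hr]
  have := Gamma_pos_of_pos ha
  positivity

open Set Real in
lemma step1 (h : ℝ) (h0 : 0 < h) (h1 : h < 1) :
    IntegrableOn (fun s : ℝ => s ^ (2 * h - 1) / (1 + s ^ 2)) (Ioi 0) ∧
    ∫ s in Ioi (0:ℝ), s ^ (2 * h - 1) / (1 + s ^ 2) = π / (2 * sin (h * π)) := by
  have key := ton (fun s y => s ^ (2 * h - 1) * exp (-(y * (1 + s ^ 2))))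
    (fun s : ℝ => s ^ (2 * h - 1) / (1 + s ^ 2))
    (fun y => Gamma h / 2 * (y ^ ((1 - h) - 1) * exp (-(1 * y))))
    (by unfold Function.uncurry; fun_prop)
    (fun s hs y hy => by have : 0 < s := hs; positivity)
    (fun s hs => by
      rw [integral_const_mul]
      have := integral_exp_mul_Ioi (a := -(1 + s ^ 2)) (by nlinarith [sq_nonneg s]) 0
      have e : ∀ y : ℝ, -(y * (1 + s ^ 2)) = -(1 + s ^ 2) * y := fun y => by ring
      simp_rw [e, this]
      simp [div_eq_mul_inv, neg_div, ← inv_neg])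
    (fun y hy => by
      have := (integrableOn_rpow_mul_exp_neg_mul_sq (b := y) hy
        (s := 2 * h - 1) (by linarith)).mul_const (exp (-y))
      refine IntegrableOn.congr_fun this (fun s hs => ?_) measurableSet_Ioi
      rw [mul_assoc, ← exp_add]; congr 2; ring)
    (fun y hy => by
      have := integral_rpow_mul_exp_neg_mul_rpow (p := 2) (q := 2 * h - 1) (b := y)
        (by norm_num) (by linarith) hy
      have e : ∀ s : ℝ, s ^ (2 * h - 1) * exp (-(y * (1 + s ^ 2))) =
          s ^ (2 * h - 1) * exp (-y * s ^ (2:ℝ)) * exp (-y) := fun s => by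
        rw [mul_assoc, ← exp_add, rpow_two]; congr 2; ring
      simp_rw [e]
      rw [integral_mul_const, this]
      rw [show -(2 * h - 1 + 1) / 2 = 1 - h - 1 by ring, show (2 * h - 1 + 1) / 2 = h by ring,
        one_mul]
      ring)
    ((gamma_int (a := 1 - h) (by linarith) one_pos).const_mul _)
  refine ⟨key.1, key.2.trans ?_⟩
  rw [integral_const_mul, integral_rpow_mul_exp_neg_mul_Ioi (by linarith) one_pos]
  have := Gamma_mul_Gamma_one_sub h
  rw [one_div_one, one_rpow, one_mul, div_mul_eq_mul_div, this, mul_comm h π, div_div, mul_comm 2]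

open Set Real in
lemma cos_int (s : ℝ) (hs : 0 < s) :
    IntegrableOn (fun x : ℝ => (1 - cos x) * exp (-(s * x))) (Ioi 0) ∧
    ∫ x in Ioi (0:ℝ), (1 - cos x) * exp (-(s * x)) = 1 / (s * (1 + s ^ 2)) := by
  have hre : ((-s + Complex.I : ℂ)).re < 0 := by simpa using hs
  have i1 := integrableOn_exp_mul_Ioi (a := -s) (by linarith) 0
  have v1 := integral_exp_mul_Ioi (a := -s) (by linarith) 0
  have i2 := integrableOn_exp_mul_complex_Ioi hre 0
  have v2 := integral_exp_mul_complex_Ioi hre 0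
  have i3 : IntegrableOn (fun x : ℝ => (Complex.exp ((-s + Complex.I) * x)).re) (Ioi 0) := i2.re
  have v3 : ∫ x in Ioi (0:ℝ), (Complex.exp ((-s + Complex.I) * x)).re = s / (1 + s ^ 2) := by
    have := integral_re (𝕜 := ℂ) i2
    simp only [RCLike.re_to_complex] at this
    rw [this, v2]
    simp [Complex.div_re, Complex.normSq_apply]
    ring
  have e : ∀ x : ℝ, (1 - cos x) * exp (-(s * x)) =
      exp (-s * x) - (Complex.exp ((-s + Complex.I) * x)).re := fun x => by
    rw [Complex.exp_re]
    simp
    ring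
  simp_rw [e]
  refine ⟨i1.sub i3, ?_⟩
  rw [integral_sub i1 i3, v1, v3]
  have : 1 + s ^ 2 ≠ 0 := by positivity
  simp
  field_simp
  ring

open Set Real in
lemma step2 (h : ℝ) (h0 : 0 < h) (h1 : h < 1) :
    IntegrableOn (fun x : ℝ => (1 - cos x) * x ^ (-1 - 2 * h)) (Ioi 0) ∧
    ∫ x in Ioi (0:ℝ), (1 - cos x) * x ^ (-1 - 2 * h) =
      π / (4 * h * Gamma (2 * h) * sin (h * π)) := by
  have hG : 0 < Gamma (2 * h) := Gamma_pos_of_pos (by linarith)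
  have hG1 : Gamma (2 * h + 1) = 2 * h * Gamma (2 * h) := Gamma_add_one (by positivity)
  have hs1 := step1 h h0 h1
  have key := ton (fun x s => (1 - cos x) * (s ^ (2 * h + 1 - 1) * exp (-(x * s))))
    (fun x : ℝ => Gamma (2 * h + 1) * ((1 - cos x) * x ^ (-1 - 2 * h)))
    (fun s : ℝ => s ^ (2 * h - 1) / (1 + s ^ 2))
    (by unfold Function.uncurry; fun_prop)
    (fun x hx s hs => by
      have := cos_le_one x
      have : 0 ≤ 1 - cos x := by linarith
      have : 0 < s := hs
      positivity)
    (fun x hx => by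
      rw [integral_const_mul, integral_rpow_mul_exp_neg_mul_Ioi (by linarith) hx, one_div,
        inv_rpow (le_of_lt hx), ← rpow_neg (le_of_lt hx),
        show -(2 * h + 1) = -1 - 2 * h by ring]
      ring)
    (fun s hs => by
      refine IntegrableOn.congr_fun ((cos_int s hs).1.const_mul (s ^ (2 * h + 1 - 1)))
        (fun x hx => ?_) measurableSet_Ioi
      rw [mul_comm x s]; ring)
    (fun s hs => by
      have e : ∀ x : ℝ, (1 - cos x) * (s ^ (2 * h + 1 - 1) * exp (-(x * s))) =
        s ^ (2 * h + 1 - 1) * ((1 - cos x) * exp (-(s * x))) := fun x => by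
          rw [mul_comm x s]; ring
      simp_rw [e]
      have hs' : 0 < s := hs
      have : 1 + s ^ 2 ≠ 0 := by positivity
      rw [integral_const_mul, (cos_int s hs).2, show 2 * h + 1 - 1 = 2 * h - 1 + 1 by ring,
        rpow_add_one hs'.ne']
      field_simp)
    hs1.1
  rw [hs1.2, integral_const_mul, hG1] at key
  have hc : 2 * h * Gamma (2 * h) ≠ 0 := by positivity
  constructor
  · refine IntegrableOn.congr_fun (key.1.const_mul (2 * h * Gamma (2 * h))⁻¹)
      (fun x _ => ?_) measurableSet_Ioi
    rw [inv_mul_cancel_left₀ hc]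
  · rw [eq_comm, ← mul_right_inj' hc, key.2]
    have : sin (h * π) ≠ 0 := by
      refine (sin_pos_of_pos_of_lt_pi (by positivity) ?_).ne'
      nlinarith [pi_pos]
    field_simp
    ring

open Set Real in
lemma step3 (h : ℝ) (h0 : 0 < h) (h1 : h < 1) :
    Integrable (fun x : ℝ => (1 - cos x) * |x| ^ (-1 - 2 * h)) ∧
    ∫ x : ℝ, (1 - cos x) * |x| ^ (-1 - 2 * h) =
      π / (2 * h * Gamma (2 * h) * sin (h * π)) := by
  obtain ⟨i, v⟩ := step2 h h0 h1
  constructor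
  · have i1 : IntegrableOn (fun x : ℝ => (1 - cos x) * |x| ^ (-1 - 2 * h)) (Ioi 0) := by
      refine i.congr_fun (fun x hx => ?_) measurableSet_Ioi
      simp only
      rw [abs_of_pos hx]
    have i2 := (show IntegrableOn (fun x : ℝ => (1 - cos x) * |x| ^ (-1 - 2 * h))
      (Ioi (-0)) by simpa using i1).comp_neg_Iio
    simp only [cos_neg, abs_neg] at i2
    rw [← integrableOn_univ, ← Iic_union_Ioi (a := (0:ℝ)), integrableOn_union]
    exact ⟨Iff.mpr integrableOn_Iic_iff_integrableOn_Iio i2, i1⟩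
  · have := integral_comp_abs (f := fun x : ℝ => (1 - cos x) * x ^ (-1 - 2 * h))
    simp only [cos_abs] at this
    rw [this, v]
    have : (4 * h * Gamma (2 * h) * sin (h * π)) = 2 * (2 * h * Gamma (2 * h) * sin (h * π)) := by
      ring
    rw [this, mul_comm 2 (_ / _), div_mul_eq_mul_div, mul_comm π, mul_div_mul_left _ _ two_ne_zero]



/-- For `h ∈ (0,1)` and `t ∈ ℝ`, the function `x ↦ |e^{itx} - 1|² |x|^{-1-2h}` is Lebesgue
integrable on `ℝ \ {0}` and `∫ |e^{itx} - 1|² |x|^{-1-2h} dx = |t|^{2h} π / (h Γ(2h) sin(hπ))`. -/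
theorem stmt8 (h : ℝ) (h0 : 0 < h) (h1 : h < 1) (t : ℝ) :
    IntegrableOn (fun x : ℝ => ‖Complex.exp (Complex.I * t * x) - 1‖ ^ 2 * |x| ^ (-1 - 2 * h))
      ({0}ᶜ : Set ℝ) ∧
    (∫ x : ℝ, ‖Complex.exp (Complex.I * t * x) - 1‖ ^ 2 * |x| ^ (-1 - 2 * h)) =
      |t| ^ (2 * h) * Real.pi / (h * Real.Gamma (2 * h) * Real.sin (h * Real.pi)) := by
  obtain ⟨i, v⟩ := step3 h h0 h1
  rcases eq_or_ne t 0 with rfl | ht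
  · have : 2 * h ≠ 0 := by positivity
    simp [Real.zero_rpow this]
  have e : ∀ x : ℝ, ‖Complex.exp (Complex.I * t * x) - 1‖ ^ 2 * |x| ^ (-1 - 2 * h) =
      (2 * |t| ^ (1 + 2 * h)) * ((1 - Real.cos (t * x)) * |t * x| ^ (-1 - 2 * h)) := fun x => by
    have e1 : ‖Complex.exp (Complex.I * t * x) - 1‖ ^ 2 = 2 * (1 - Real.cos (t * x)) := by
      have := Complex.norm_exp_I_mul_ofReal_sub_one (t * x)
      push_cast at this
      rw [mul_assoc, this, Real.norm_eq_abs, sq_abs, mul_pow, Real.sin_sq_eq_half_sub]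
      rw [mul_div_cancel₀ _ two_ne_zero]
      ring
    have ht' : 0 < |t| := abs_pos.2 ht
    have e2 : |t| ^ (1 + 2 * h) * |t| ^ (-1 - 2 * h) = 1 := by
      rw [← Real.rpow_add ht']; ring_nf; exact Real.rpow_zero _
    rw [e1, abs_mul, Real.mul_rpow (abs_nonneg _) (abs_nonneg _)]
    linear_combination (-2 * (1 - Real.cos (t * x)) * |x| ^ (-1 - 2 * h)) * e2
  simp_rw [e]
  refine ⟨((i.comp_mul_left' ht).const_mul _).integrableOn, ?_⟩
  rw [integral_const_mul,
    Measure.integral_comp_mul_left (fun x : ℝ => (1 - Real.cos x) * |x| ^ (-1 - 2 * h)) t, v]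
  have ht' : 0 < |t| := abs_pos.2 ht
  rw [Real.rpow_add ht', Real.rpow_one, abs_inv, smul_eq_mul]
  have : 2 * h * Real.Gamma (2 * h) * Real.sin (h * Real.pi) =
    2 * (h * Real.Gamma (2 * h) * Real.sin (h * Real.pi)) := by ring
  rw [this, ← div_div]
  field_simp
end

section
/- For every t ∈ ℝ, the function u ↦ (log(|t−u|/|u|))² is Lebesgue integrable on ℝ and ∫_ℝ (log(|t−u|/|u|))² du = π²·|t|. -/
open MeasureTheory

lemma aux_odd : HasSum (fun k : ℕ => (1:ℝ) / (2 * (k:ℝ) + 1) ^ 2) (Real.pi ^ 2 / 8) := by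
  have h := hasSum_zeta_two
  have he : HasSum (fun k : ℕ => (1:ℝ) / ((2 * k : ℕ) : ℝ) ^ 2) (Real.pi ^ 2 / 6 / 4) := by
    refine (h.div_const 4).congr_fun ?_ |> fun h => h
    intro k
    push_cast
    rw [mul_pow, div_div]
    ring
  have ho : Summable (fun k : ℕ => (1:ℝ) / ((2 * k + 1 : ℕ) : ℝ) ^ 2) :=
    h.summable.comp_injective (i := fun k : ℕ => 2 * k + 1) (fun a b hab => by simpa using hab)
  have := HasSum.even_add_odd (f := fun n : ℕ => (1 : ℝ) / (n : ℝ) ^ 2) he ho.hasSum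
  have h2 := this.unique h
  have h3 := ho.hasSum
  have h4 : ∑' k : ℕ, (1:ℝ) / ((2 * k + 1 : ℕ) : ℝ) ^ 2 = Real.pi ^ 2 / 8 := by linarith
  rw [h4] at h3
  simpa using h3

lemma aux_series (x : ℝ) (hx : 0 < x) :
    HasSum (fun k : ℕ => 2 * (2 * (k:ℝ) + 1) * (x ^ 2 * Real.exp (-((2 * (k:ℝ) + 1) * x))))
      (Real.exp x / (1 + Real.exp x) ^ 2 * x ^ 2 + Real.exp x / (1 - Real.exp x) ^ 2 * x ^ 2) := by
  set q := Real.exp (-x) with hq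
  have hq0 : 0 < q := Real.exp_pos _
  have hq1 : q < 1 := by rw [hq, Real.exp_lt_one_iff]; linarith
  have hE : Real.exp x = q⁻¹ := by rw [hq, Real.exp_neg, inv_inv]
  have hr0 : 0 < q ^ 2 := by positivity
  have hr1 : q ^ 2 < 1 := by nlinarith
  have hn : ‖q ^ 2‖ < 1 := by rw [Real.norm_of_nonneg hr0.le]; exact hr1
  have h1 := hasSum_coe_mul_geometric_of_norm_lt_one hn
  have h2 := hasSum_geometric_of_lt_one hr0.le hr1
  have h3 := ((h1.mul_left 2).add h2).mul_left (2 * q * x ^ 2)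
  convert! h3 using 1
  · funext k
    have : Real.exp (-((2 * (k:ℝ) + 1) * x)) = (q ^ 2) ^ k * q := by
      rw [hq, ← Real.exp_nat_mul, ← Real.exp_nat_mul, ← Real.exp_add]
      congr 1; push_cast; ring
    rw [this]; ring
  · rw [hE]
    have a : 1 - q ≠ 0 := by linarith
    have b : 1 + q ≠ 0 := by linarith
    have c : 1 - q ^ 2 ≠ 0 := by linarith
    have e1 : 1 + q⁻¹ = (1 + q) / q := by field_simp; ring
    have e2 : 1 - q⁻¹ = -(1 - q) / q := by field_simp; ring
    have e3 : 1 - q ^ 2 = (1 - q) * (1 + q) := by ring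
    rw [e1, e2, e3]
    field_simp
    ring

lemma aux_term (k : ℕ) :
    ∫⁻ x in Set.Ioi (0:ℝ), ENNReal.ofReal
      (2 * (2 * (k:ℝ) + 1) * (x ^ 2 * Real.exp (-((2 * (k:ℝ) + 1) * x))))
      = ENNReal.ofReal (4 * (1 / (2 * (k:ℝ) + 1) ^ 2)) := by
  have hr : 0 < 2 * (k:ℝ) + 1 := by positivity
  have h := Real.integral_rpow_mul_exp_neg_mul_Ioi (a := 3) (by norm_num) hr
  have hG : Real.Gamma 3 = 2 := by
    have := Real.Gamma_nat_eq_factorial 2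
    rw [show ((2:ℕ):ℝ) + 1 = 3 by norm_num] at this
    rw [this]; simp [Nat.factorial]
  have e : ∀ x : ℝ, x ^ ((3:ℝ) - 1) = x ^ 2 := fun x => by
    rw [show (3:ℝ) - 1 = (2:ℕ) by norm_num, Real.rpow_natCast]
  simp only [e, hG] at h
  have e3 : (1 / (2 * (k:ℝ) + 1)) ^ (3:ℝ) = (1 / (2 * (k:ℝ) + 1)) ^ 3 := by
    rw [show (3:ℝ) = (3:ℕ) by norm_num, Real.rpow_natCast]
  rw [e3] at h
  have hi : IntegrableOn (fun x : ℝ => x ^ 2 * Real.exp (-((2 * (k:ℝ) + 1) * x)))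
      (Set.Ioi 0) := by
    by_contra hc
    rw [integral_undef hc] at h
    have : 0 < (1 / (2 * (k:ℝ) + 1)) ^ 3 * 2 := by positivity
    linarith
  rw [← ofReal_integral_eq_lintegral_ofReal (hi.const_mul _)
    (Filter.Eventually.of_forall fun x => by positivity), integral_const_mul, h]
  congr 1
  field_simp
  ring

lemma aux_half : ∫⁻ x in Set.Ioi (0:ℝ), ENNReal.ofReal
      (Real.exp x / (1 + Real.exp x) ^ 2 * x ^ 2 + Real.exp x / (1 - Real.exp x) ^ 2 * x ^ 2)
      = ENNReal.ofReal (Real.pi ^ 2 / 2) := by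
  have : ∫⁻ x in Set.Ioi (0:ℝ), ENNReal.ofReal
      (Real.exp x / (1 + Real.exp x) ^ 2 * x ^ 2 + Real.exp x / (1 - Real.exp x) ^ 2 * x ^ 2)
      = ∫⁻ x in Set.Ioi (0:ℝ), ∑' k : ℕ, ENNReal.ofReal
      (2 * (2 * (k:ℝ) + 1) * (x ^ 2 * Real.exp (-((2 * (k:ℝ) + 1) * x)))) := by
    refine setLIntegral_congr_fun measurableSet_Ioi fun x hx => ?_
    have h := aux_series x hx
    rw [← h.tsum_eq, ENNReal.ofReal_tsum_of_nonneg (fun k => by positivity) h.summable]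
  rw [this, lintegral_tsum (fun k => by fun_prop)]
  simp only [aux_term]
  have h := aux_odd.mul_left 4
  rw [← ENNReal.ofReal_tsum_of_nonneg (fun k => by positivity) h.summable, h.tsum_eq]
  congr 1; ring

lemma aux_p : ∫⁻ u in Set.Ioo (0:ℝ) (1/2), ENNReal.ofReal (Real.log (|1 - u| / |u|) ^ 2) =
    ∫⁻ x in Set.Ioi (0:ℝ), ENNReal.ofReal (Real.exp x / (1 + Real.exp x) ^ 2 * x ^ 2) := by
  have him : (fun x : ℝ => (1 + Real.exp x)⁻¹) '' Set.Ioi 0 = Set.Ioo (0:ℝ) (1/2) := by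
    ext u
    simp only [Set.mem_image, Set.mem_Ioi, Set.mem_Ioo]
    constructor
    · rintro ⟨x, hx, rfl⟩
      have := Real.one_lt_exp_iff.2 hx
      refine ⟨by positivity, ?_⟩
      rw [one_div]
      exact inv_strictAnti₀ (by norm_num) (by linarith)
    · rintro ⟨h0, h1⟩
      have h2 : 1 < (1 - u) / u := by rw [lt_div_iff₀ h0]; linarith
      refine ⟨Real.log ((1 - u) / u), Real.log_pos h2, ?_⟩
      rw [Real.exp_log (by linarith)]
      field_simp
      ring
  rw [← him, lintegral_image_eq_lintegral_abs_deriv_mul measurableSet_Ioi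
    (f' := fun x => -Real.exp x / (1 + Real.exp x) ^ 2)]
  · refine setLIntegral_congr_fun measurableSet_Ioi fun x hx => ?_
    have hp := Real.exp_pos x
    have e : |1 - (1 + Real.exp x)⁻¹| / |(1 + Real.exp x)⁻¹| = Real.exp x := by
      rw [← abs_div, show (1 - (1 + Real.exp x)⁻¹) / (1 + Real.exp x)⁻¹ = Real.exp x by
        field_simp; ring, abs_of_pos hp]
    rw [e, Real.log_exp, ← ENNReal.ofReal_mul (abs_nonneg _), neg_div, abs_neg,
      abs_of_pos (by positivity)]
  · intro x _
    have hp := Real.exp_pos x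
    exact (((Real.hasDerivAt_exp x).const_add 1).inv (by positivity)).hasDerivWithinAt
  · intro x _ y _ h
    simpa using h

lemma aux_m : ∫⁻ u in Set.Iio (0:ℝ), ENNReal.ofReal (Real.log (|1 - u| / |u|) ^ 2) =
    ∫⁻ x in Set.Ioi (0:ℝ), ENNReal.ofReal (Real.exp x / (1 - Real.exp x) ^ 2 * x ^ 2) := by
  have him : (fun x : ℝ => (1 - Real.exp x)⁻¹) '' Set.Ioi 0 = Set.Iio (0:ℝ) := by
    ext u
    simp only [Set.mem_image, Set.mem_Ioi, Set.mem_Iio]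
    constructor
    · rintro ⟨x, hx, rfl⟩
      have := Real.one_lt_exp_iff.2 hx
      exact inv_lt_zero.2 (by linarith)
    · intro h0
      have h2 : 1 < (u - 1) / u := by rw [lt_div_iff_of_neg h0]; linarith
      refine ⟨Real.log ((u - 1) / u), Real.log_pos h2, ?_⟩
      rw [Real.exp_log (by linarith)]
      have : u ≠ 0 := h0.ne
      rw [show 1 - (u - 1) / u = u⁻¹ by field_simp; ring, inv_inv]
  rw [← him, lintegral_image_eq_lintegral_abs_deriv_mul measurableSet_Ioi
    (f' := fun x => -(-Real.exp x) / (1 - Real.exp x) ^ 2)]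
  · refine setLIntegral_congr_fun measurableSet_Ioi fun x hx => ?_
    have hp := Real.exp_pos x
    have h1 := Real.one_lt_exp_iff.2 (Set.mem_Ioi.1 hx)
    have hne : 1 - Real.exp x ≠ 0 := by linarith
    have e : |1 - (1 - Real.exp x)⁻¹| / |(1 - Real.exp x)⁻¹| = Real.exp x := by
      rw [← abs_div, show (1 - (1 - Real.exp x)⁻¹) / (1 - Real.exp x)⁻¹ = -Real.exp x by
        field_simp; ring, abs_neg, abs_of_pos hp]
    rw [e, Real.log_exp, ← ENNReal.ofReal_mul (abs_nonneg _), neg_neg,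
      abs_of_pos (by positivity)]
  · intro x hx
    have h1 := Real.one_lt_exp_iff.2 (Set.mem_Ioi.1 hx)
    exact (((Real.hasDerivAt_exp x).const_sub 1).inv (by linarith)).hasDerivWithinAt
  · intro x _ y _ h
    simpa using h

lemma aux_left : ∫⁻ u in Set.Iio (1/2:ℝ), ENNReal.ofReal (Real.log (|1 - u| / |u|) ^ 2) =
    ENNReal.ofReal (Real.pi ^ 2 / 2) := by
  rw [← Set.Iio_union_Ico_eq_Iio (show (0:ℝ) ≤ 1/2 by norm_num),
    lintegral_union measurableSet_Ico, setLIntegral_congr (Ioo_ae_eq_Ico (a := (0:ℝ)) (b := 1/2)).symm,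
    aux_p, aux_m, ← aux_half, add_comm, ← lintegral_add_left (by fun_prop)]
  · refine lintegral_congr fun x => ?_
    rw [ENNReal.ofReal_add (by positivity) (by positivity)]
  · rw [Set.disjoint_left]
    intro x hx hx'
    exact absurd hx'.1 (not_le.2 hx)

lemma aux_right : ∫⁻ u in Set.Ioi (1/2:ℝ), ENNReal.ofReal (Real.log (|1 - u| / |u|) ^ 2) =
    ENNReal.ofReal (Real.pi ^ 2 / 2) := by
  have him : (fun x : ℝ => 1 - x) '' Set.Iio (1/2) = Set.Ioi (1/2:ℝ) := by
    rw [Set.image_const_sub_Iio]; norm_num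
  rw [← him, lintegral_image_eq_lintegral_abs_deriv_mul measurableSet_Iio
    (f' := fun x => -1), ← aux_left]
  · refine lintegral_congr fun x => ?_
    have : |1 - (1 - x)| / |1 - x| = (|1 - x| / |x|)⁻¹ := by
      rw [sub_sub_cancel, inv_div]
    rw [this, Real.log_inv]
    simp
  · intro x _
    exact ((hasDerivAt_id x).const_sub 1).hasDerivWithinAt
  · intro x _ y _ h
    simpa using h

lemma aux_all : ∫⁻ u : ℝ, ENNReal.ofReal (Real.log (|1 - u| / |u|) ^ 2) =
    ENNReal.ofReal (Real.pi ^ 2) := by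
  rw [← lintegral_add_compl _ (measurableSet_Iio (a := (1/2:ℝ))), Set.compl_Iio,
    setLIntegral_congr (Ioi_ae_eq_Ici (a := (1/2:ℝ))).symm, aux_left, aux_right,
    ← ENNReal.ofReal_add (by positivity) (by positivity)]
  congr 1; ring

lemma aux_one_s19 : Integrable (fun u : ℝ => Real.log (|1 - u| / |u|) ^ 2) ∧
    (∫ u : ℝ, Real.log (|1 - u| / |u|) ^ 2) = Real.pi ^ 2 := by
  have hm : Measurable (fun u : ℝ => Real.log (|1 - u| / |u|) ^ 2) := by fun_prop
  constructor
  · rw [← lintegral_ofReal_ne_top_iff_integrable hm.aestronglyMeasurable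
      (Filter.Eventually.of_forall fun x => by positivity), aux_all]
    exact ENNReal.ofReal_ne_top
  · rw [integral_eq_lintegral_of_nonneg_ae
      (Filter.Eventually.of_forall fun x => by positivity) hm.aestronglyMeasurable, aux_all,
      ENNReal.toReal_ofReal (by positivity)]

/-- For every `t ∈ ℝ`, the function `u ↦ (log(|t-u|/|u|))²` is Lebesgue integrable on `ℝ`
and `∫ (log(|t-u|/|u|))² du = π² |t|`. -/
theorem stmt19 (t : ℝ) :
    Integrable (fun u : ℝ => Real.log (|t - u| / |u|) ^ 2) ∧
    (∫ u : ℝ, Real.log (|t - u| / |u|) ^ 2) = Real.pi ^ 2 * |t| := by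
  rcases eq_or_ne t 0 with rfl | ht
  · have : (fun u : ℝ => Real.log (|0 - u| / |u|) ^ 2) = fun _ => 0 := by
      funext u
      rcases eq_or_ne u 0 with rfl | hu
      · simp
      · simp [hu]
    rw [this]
    simp
  · have : (fun u : ℝ => Real.log (|t - u| / |u|) ^ 2) =
        fun u => (fun v : ℝ => Real.log (|1 - v| / |v|) ^ 2) (u / t) := by
      funext u
      simp only
      rw [← abs_div, ← abs_div]
      congr 3
      rcases eq_or_ne u 0 with rfl | hu
      · simp
      · field_simp
    rw [this]
    refine ⟨aux_one_s19.1.comp_div ht, ?_⟩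
    rw [Measure.integral_comp_div (fun v : ℝ => Real.log (|1 - v| / |v|) ^ 2) t, aux_one_s19.2, smul_eq_mul, mul_comm]
end
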